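/- Let λ ∈ (0, 1/2]. Let f : ℝ → ℝ be C² with f'(0) ≥ 0, with f'' globally Lipschitz, and with |f''| uniformly bounded on ℝ. Let u₀ : [0,∞) → ℝ be locally absolutely continuous with u₀(0) = 0, u₀'(0) = 0, and ∫_K |u₀'(x)|^{1/λ} dx < ∞ for every compact K ⊂ [0,∞). Then there exists a weak solution u : [0,∞) × [0,∞) → ℝ of equation (E1) with these data; that is: u is continuous, u(0,t) = 0 for all t ≥ 0, u(x,0) = u₀(x) for all x ≥ 0, for every t ≥ 0 the function u(·,t) is locally absolutely continuous in x with ∫_K |u_x(x,t)|^{1/λ} dx < ∞ on every compact K ⊂ [0,∞) (hence u(·,t) is locally Hölder continuous in x with exponent 1−λ), and for every test function φ ∈ C¹ with compact support contained in (0,∞) × (0,∞) one has ∫₀^∞ ∫₀^∞ { −u_x (φ_t + f'(u) φ_x) + (λ−1) f''(u) (u_x)² φ } dx dt = 0. -/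

import Mathlib

/-!
Write `p = 1/λ ≥ 2`, `F = f'`, `g = f''`. The solution is built along characteristics `X(ξ,t)`,
`X_t = F(u)`. There the slope satisfies the Riccati equation `d/dt u_x = -λ g(u) u_x²`, so
`u_x = w / S` with `w` constant in time and `S = s₀ + λ w A`, `A(ξ,t) = ∫₀ᵗ g(U(ξ,τ)) dτ`. With
`X_ξ = |S|^p`, the solution `U(ξ,t) = u(X(ξ,t),t)` has `U_ξ = w |S|^(p-2) S`, and the system closes
into a fixed-point equation for `A` alone, in which `S` is free to change sign. Since `g` is bounded
and Lipschitz, Picard iteration solves it for all times (`LagData.exists_fixedPoint`), and `A`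
depends on `ξ` with an explicit modulus of continuity.

To return to `(x,t)`, the map `X(·,t)` must be onto `ℝ` for every `t`. Starting with `s₀ = 1`
everywhere could fail, as `S` may vanish on a whole half line of labels at once. For this reason the
initial labels are interleaved with *rarefaction labels* of initial strain `0`: each unit block of
labels is cut into small cells, the first half of a cell carries the initial data with strain `1`,
and the second half copies the values of `w` from the first half with strain `0`. The initial
function is not changed, but the strains of a label and of its copy differ by almost `1` at later
times, by the modulus of continuity of `A`. If the cells of the `k`-th block are small enough, that
block therefore keeps length at least `8^(-p)` for `|t| ≤ k` (`mat_coercive`), and `X(ξ,t) → ∞`.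

Given surjectivity, `u(X(ξ,t),t) = U(ξ,t)` defines a continuous function, because `U` is constant on
labels sharing a position (`LagSol.U_eq_of_X_eq`). Its slope is in `L^p_loc`, since
`∫ |u_x|^p dx ≤ ∫ |w|^p dξ`. The labels `ξ < 0` carry the zero solution, and as `F(0) ≥ 0` they
occupy `x ≤ F(0) t`, which gives the boundary condition. Finally, the weak formulation becomes, by
the change of variables `x = X(ξ,t)` (`LagSol.map_flow`), the integral over `ξ` of
`-∫ d/dt [w |S|^(p-2) S φ(X,t)] dt = 0`. At times with `S = 0` this uses that `S_t = λ w g(U)`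
vanishes almost everywhere on `{S = 0}`, which matters when `p = 2`.
-/

open Real Set MeasureTheory

/-- Partial derivative in the spatial direction `x` (first coordinate). -/
noncomputable def px (φ : ℝ × ℝ → ℝ) (p : ℝ × ℝ) : ℝ := fderiv ℝ φ p (1, 0)

/-- Partial derivative in the time direction `t` (second coordinate). -/
noncomputable def pt (φ : ℝ × ℝ → ℝ) (p : ℝ × ℝ) : ℝ := fderiv ℝ φ p (0, 1)

section Lagrangian
open Filter Topology

/-! ### Odd powers, chain rules and monotone changes of variables -/

/-- The `(p-1)`-homogeneous odd power `s ↦ |s|^(p-2) s`, i.e. the derivative of `|s|^p / p`. -/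
noncomputable def oddPow (p s : ℝ) : ℝ := |s| ^ (p - 2) * s

lemma continuous_absPow {q : ℝ} (hq : 0 ≤ q) : Continuous (fun s : ℝ => |s| ^ q) :=
  continuous_abs.rpow_const fun _ => Or.inr hq

lemma continuous_oddPow {p : ℝ} (hp : 2 ≤ p) : Continuous (oddPow p) :=
  (continuous_absPow (by linarith)).mul continuous_id

lemma abs_oddPow {p : ℝ} (hp : 2 ≤ p) (s : ℝ) : |oddPow p s| = |s| ^ (p - 1) := by
  rcases eq_or_ne s 0 with rfl | hs
  · simp [oddPow, Real.zero_rpow (show p - 1 ≠ 0 by linarith)]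
  · rw [oddPow, abs_mul, abs_of_nonneg (by positivity), ← Real.rpow_add_one (by simpa using hs)]
    ring_nf

lemma hasDerivAt_oddPow {p : ℝ} (hp : 2 ≤ p) (s : ℝ) :
    HasDerivAt (oddPow p) ((p - 1) * |s| ^ (p - 2)) s := by
  rcases eq_or_ne s 0 with rfl | hs
  · rw [hasDerivAt_iff_tendsto_slope]
    have h1 : (p - 1) * |(0:ℝ)| ^ (p - 2) = |(0:ℝ)| ^ (p - 2) := by
      rcases eq_or_lt_of_le hp with rfl | h
      · norm_num
      · simp [Real.zero_rpow (show p - 2 ≠ 0 by linarith)]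
    rw [h1]
    have h2 : Tendsto (fun s : ℝ => |s| ^ (p - 2)) (𝓝[≠] 0) (𝓝 (|(0:ℝ)| ^ (p - 2))) :=
      ((continuous_absPow (by linarith)).tendsto 0).mono_left nhdsWithin_le_nhds
    refine h2.congr' ?_
    filter_upwards [self_mem_nhdsWithin] with x hx
    have hx' : x ≠ 0 := hx
    simp [slope_def_field, oddPow]
    field_simp
  · have h1 : HasDerivAt (fun x : ℝ => |x| ^ (p - 2)) (SignType.sign s * (p - 2) * |s| ^ (p - 2 - 1)) s := by
      have := (hasDerivAt_abs hs).rpow_const (p := p - 2) (Or.inl (by simpa using hs))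
      simpa using this
    have h2 := h1.mul (hasDerivAt_id s)
    refine h2.congr_deriv ?_
    have h3 : |s| ^ (p - 2) = |s| ^ (p - 2 - 1) * |s| := by
      rw [← Real.rpow_add_one (by simpa using hs)]; ring_nf
    have h4 : (SignType.sign s : ℝ) * s = |s| := sign_mul_self s
    simp only [id]
    rw [h3]
    linear_combination ((p-2) * |s| ^ (p - 2 - 1)) * h4

lemma abs_oddPow_sub_le {p : ℝ} (hp : 2 ≤ p) {a b B : ℝ} (ha : |a| ≤ B) (hb : |b| ≤ B) :
    |oddPow p a - oddPow p b| ≤ (p - 1) * B ^ (p - 2) * |a - b| := by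
  have := (convex_Icc (-B) B).norm_image_sub_le_of_norm_hasDerivWithin_le
    (f := oddPow p) (f' := fun s => (p - 1) * |s| ^ (p - 2)) (C := (p - 1) * B ^ (p - 2))
    (fun x _ => (hasDerivAt_oddPow hp x).hasDerivWithinAt)
    (fun x hx => by
      rw [Real.norm_eq_abs, abs_of_nonneg (mul_nonneg (by linarith) (by positivity))]
      have : |x| ≤ B := abs_le.2 hx
      gcongr; linarith)
    (abs_le.1 hb) (abs_le.1 ha)
  simpa using this

lemma absPow_mul_div (p w s : ℝ) : |s| ^ p * (w / s) = w * oddPow p s := by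
  rcases eq_or_ne s 0 with rfl | hs
  · simp [oddPow]
  · have h3 : |s| ^ p = |s| ^ (p - 2) * s ^ 2 := by
      rw [← sq_abs, ← Real.rpow_natCast |s| 2, ← Real.rpow_add (by simpa using hs)]; norm_num
    rw [h3, oddPow]; field_simp

lemma absPow_mul_div_sq {p : ℝ} {w s : ℝ} (hs : s ≠ 0) :
    |s| ^ p * (w / s) ^ 2 = w ^ 2 * |s| ^ (p - 2) := by
  have h3 : |s| ^ p = |s| ^ (p - 2) * s ^ 2 := by
    rw [← sq_abs, ← Real.rpow_natCast |s| 2, ← Real.rpow_add (by simpa using hs)]; norm_num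
  rw [h3]; field_simp

/-- Continuity in `t` for each `ξ`, together with a modulus of continuity in `ξ` that is locally
uniform in `t`, gives joint continuity. -/
lemma continuous_uncurry_of_modulus {F : ℝ → ℝ → ℝ} {C G : ℝ → ℝ} (hC : Continuous C)
    (hG : Continuous G) (ht : ∀ ξ, Continuous (F ξ))
    (hξ : ∀ ξ η t, |F ξ t - F η t| ≤ C t * |G ξ - G η|) : Continuous (Function.uncurry F) := by
  rw [continuous_iff_continuousAt]
  rintro ⟨η, t₀⟩
  have h1 : Tendsto (fun q : ℝ × ℝ => C q.2 * |G q.1 - G η| + |F η q.2 - F η t₀|) (𝓝 (η, t₀))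
      (𝓝 0) := by
    have : Continuous (fun q : ℝ × ℝ => C q.2 * |G q.1 - G η| + |F η q.2 - F η t₀|) := by
      have := ht η
      fun_prop
    have h := this.tendsto (η, t₀)
    simpa using h
  refine tendsto_iff_dist_tendsto_zero.2 (squeeze_zero (fun _ => dist_nonneg) (fun q => ?_) h1)
  rw [Real.dist_eq]
  calc |F q.1 q.2 - F η t₀| ≤ |F q.1 q.2 - F η q.2| + |F η q.2 - F η t₀| := abs_sub_le _ _ _
    _ ≤ _ := by gcongr; exact hξ _ _ _

/-- Chain rule for a Lipschitz `C¹` outer function and an indefinite integral. -/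
lemma integral_comp_primitive {F g k : ℝ → ℝ} {M : ℝ} (hF : ∀ a, HasDerivAt F (g a) a)
    (hM : ∀ a, |g a| ≤ M) (hk : ∀ a b, IntervalIntegrable k volume a b) (ξ : ℝ) :
    ∫ η in (0:ℝ)..ξ, g (∫ y in (0:ℝ)..η, k y) * k η = F (∫ y in (0:ℝ)..ξ, k y) - F 0 := by
  set U : ℝ → ℝ := fun η => ∫ y in (0:ℝ)..η, k y with hU
  have hLip : ∀ a b, |F a - F b| ≤ M * |a - b| := fun a b => by
    have := convex_univ.norm_image_sub_le_of_norm_hasDerivWithin_le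
      (f := F) (f' := g) (C := M) (fun x _ => (hF x).hasDerivWithinAt) (fun x _ => hM x)
      (mem_univ b) (mem_univ a)
    simpa using this
  have hM0 : 0 ≤ M := (abs_nonneg _).trans (hM 0)
  have hac : AbsolutelyContinuousOnInterval (fun η => F (U η)) 0 ξ := by
    have h0 := (hk 0 ξ).absolutelyContinuousOnInterval_intervalIntegral (c := 0) (by simp)
    rw [absolutelyContinuousOnInterval_iff] at h0 ⊢
    intro ε hε
    obtain ⟨δ, hδ, h⟩ := h0 (ε / (M + 1)) (by positivity)
    refine ⟨δ, hδ, fun E hE hs => ?_⟩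
    have h1 := h E hE hs
    calc ∑ i ∈ Finset.range E.1, dist (F (U (E.2 i).1)) (F (U (E.2 i).2))
        ≤ ∑ i ∈ Finset.range E.1, (M + 1) * dist (U (E.2 i).1) (U (E.2 i).2) := by
          refine Finset.sum_le_sum fun i _ => ?_
          rw [Real.dist_eq, Real.dist_eq]
          refine (hLip _ _).trans ?_
          gcongr
          linarith
      _ = (M + 1) * ∑ i ∈ Finset.range E.1, dist (U (E.2 i).1) (U (E.2 i).2) := by
          rw [Finset.mul_sum]
      _ < (M + 1) * (ε / (M + 1)) := by gcongr
      _ = ε := by field_simp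
  have h1 := hac.integral_deriv_eq_sub
  have h2 : U 0 = 0 := by simp [hU]
  rw [h2] at h1
  rw [← h1]
  refine intervalIntegral.integral_congr_ae ?_
  filter_upwards [(hk 0 ξ).ae_hasDerivAt_integral] with x hx hx'
  have h3 := hx (uIoc_subset_uIcc hx') 0 (by simp)
  exact ((hF (U x)).comp x h3).deriv.symm

/-- The derivative of a differentiable function vanishes almost everywhere on the zero set. -/
lemma ae_deriv_eq_zero_of_eq_zero {S S' : ℝ → ℝ} (h : ∀ t, HasDerivAt S (S' t) t) :
    ∀ᵐ t, S t = 0 → S' t = 0 := by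
  have hc : {x ∈ {t | S t = 0} | 𝓝[{t | S t = 0} ∩ Ioi x] x = ⊥}.Countable :=
    countable_setOfPred_isolated_right_within
  filter_upwards [hc.ae_notMem volume] with t ht h0
  have hne : (𝓝[{t | S t = 0} ∩ Ioi t] t).NeBot := ⟨fun hb => ht ⟨h0, hb⟩⟩
  have h1 : Tendsto (slope S t) (𝓝[{t | S t = 0} ∩ Ioi t] t) (𝓝 (S' t)) :=
    (hasDerivAt_iff_tendsto_slope.1 (h t)).mono_left
      (nhdsWithin_mono _ fun x hx => (ne_of_gt hx.2 : x ≠ t))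
  have h2 : Tendsto (slope S t) (𝓝[{t | S t = 0} ∩ Ioi t] t) (𝓝 0) := by
    refine tendsto_const_nhds.congr' ?_
    filter_upwards [self_mem_nhdsWithin] with x hx
    have : S x = 0 := hx.1
    simp [slope_def_field, this, h0]
  exact tendsto_nhds_unique h1 h2

/-- Monotone change of variables: an indefinite integral `X` of a nonnegative density `q` that is
onto `ℝ` pushes `q dξ` forward to Lebesgue measure. -/
lemma map_withDensity_primitive {X q : ℝ → ℝ} (hq0 : ∀ ξ, 0 ≤ q ξ)
    (hqi : ∀ a b, IntervalIntegrable q volume a b)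
    (hX : ∀ a b, X b - X a = ∫ ξ in a..b, q ξ) (hXc : Continuous X)
    (hsurj : Function.Surjective X) :
    Measure.map X (volume.withDensity fun ξ => ENNReal.ofReal (q ξ)) = volume := by
  have hmono : Monotone X := fun a b hab => by
    have : 0 ≤ X b - X a := by
      rw [hX]; exact intervalIntegral.integral_nonneg hab fun x _ => hq0 x
    linarith
  symm
  refine Real.measure_ext_Ioo_rat fun a b => ?_
  rw [Measure.map_apply hXc.measurable measurableSet_Ioo]
  rcases le_or_gt (b : ℝ) a with hab | hab
  · simp [Ioo_eq_empty_of_le hab]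
  obtain ⟨α, hα⟩ := hsurj a
  obtain ⟨β, hβ⟩ := hsurj b
  have hαβ : α ≤ β := by
    by_contra hlt
    have := hmono (not_le.1 hlt).le
    linarith
  rw [withDensity_apply _ (hXc.measurable measurableSet_Ioo)]
  have hI : ∫⁻ ξ in Ioc α β, ENNReal.ofReal (q ξ) = ENNReal.ofReal (b - a) := by
    rw [← ofReal_integral_eq_lintegral_ofReal
      ((intervalIntegrable_iff_integrableOn_Ioc_of_le hαβ).1 (hqi α β))
      (ae_of_all _ fun x => hq0 x), ← intervalIntegral.integral_of_le hαβ, ← hX, hα, hβ]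
  -- the points of `(α, β]` outside the preimage carry no mass, because `X` is constant there
  have hsub : X ⁻¹' Ioo (a:ℝ) b ⊆ Ioc α β := fun ξ hξ => by
    have h1 : a < X ξ := hξ.1
    have h2 : X ξ < b := hξ.2
    refine ⟨?_, ?_⟩
    · by_contra hlt
      have := hmono (not_lt.1 hlt); linarith
    · by_contra hlt
      have := hmono (not_le.1 hlt).le; linarith
  rw [Real.volume_Ioo, ← hI]
  refine le_antisymm ?_ (lintegral_mono_set hsub)
  refine le_of_forall_lt fun c hc => ?_
  rw [hI] at hc
  have hlim : Tendsto (fun e : ℝ => ENNReal.ofReal (b - a - 2 * e)) (𝓝[>] 0)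
      (𝓝 (ENNReal.ofReal (b - a))) := by
    have : Continuous (fun e : ℝ => ENNReal.ofReal (b - a - 2 * e)) :=
      ENNReal.continuous_ofReal.comp (by fun_prop)
    have h := (this.tendsto 0).mono_left (nhdsWithin_le_nhds (s := Ioi (0:ℝ)))
    simpa using h
  obtain ⟨e, he1, he2, he3⟩ := ((hlim.eventually_const_lt hc).and
    ((eventually_mem_nhdsWithin).and (nhdsWithin_le_nhds (Iio_mem_nhds
      (show (0:ℝ) < (b - a) / 2 by linarith))))).exists
  have he2 : 0 < e := he2
  have he3 : e < (b - a) / 2 := he3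
  refine he1.trans_le ?_
  obtain ⟨γ, hγ⟩ := hsurj (a + e)
  obtain ⟨δ, hδ⟩ := hsurj (b - e)
  have hγδ : γ ≤ δ := by
    by_contra hlt
    have := hmono (not_le.1 hlt).le
    linarith
  have hI2 : ∫⁻ ξ in Ioc γ δ, ENNReal.ofReal (q ξ) = ENNReal.ofReal (b - a - 2 * e) := by
    rw [← ofReal_integral_eq_lintegral_ofReal
      ((intervalIntegrable_iff_integrableOn_Ioc_of_le hγδ).1 (hqi γ δ))
      (ae_of_all _ fun x => hq0 x), ← intervalIntegral.integral_of_le hγδ, ← hX, hγ, hδ]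
    ring_nf
  rw [← hI2]
  refine lintegral_mono_set fun ξ hξ => ?_
  have h1 := hmono hξ.1.le
  have h2 := hmono hξ.2
  exact ⟨by linarith, by linarith⟩

/-! ### The Lagrangian system and its fixed point -/

/-- Standing assumptions on the Lagrangian data: `p = 1/λ ≥ 2`, `g = f''` is bounded by `M` and
`L`-Lipschitz, `s₀^p dξ` is the initial length element and `w` is the conserved product of strain
and slope along a characteristic, with `|w|^p` locally integrable. -/
structure LagData (p lam M L : ℝ) (g s₀ w : ℝ → ℝ) : Prop where
  hp : 2 ≤ p
  hlam : 0 < lam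
  lam_mul : lam * p = 1
  g_lip : ∀ a b, |g a - g b| ≤ L * |a - b|
  g_bd : ∀ a, |g a| ≤ M
  s_meas : Measurable s₀
  w_meas : Measurable w
  s_nonneg : ∀ ξ, 0 ≤ s₀ ξ
  s_le : ∀ ξ, s₀ ξ ≤ 1
  K_int : ∀ a b, IntervalIntegrable (fun ξ => (1 + |w ξ|) ^ p) volume a b

/-- The strain `S = s₀ + λ w A` of a characteristic, where `A = ∫₀ᵗ f''(U) dτ`. The length element
is `X_ξ = |S|^p` and the slope is `u_x = w / S`. -/
def strain (lam : ℝ) (s₀ w : ℝ → ℝ) (A : ℝ → ℝ → ℝ) (ξ t : ℝ) : ℝ := s₀ ξ + lam * w ξ * A ξ t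

/-- The solution in Lagrangian variables, `U(ξ,t) = ∫₀^ξ w |S|^(p-2) S dη`. -/
noncomputable def lagU (p lam : ℝ) (s₀ w : ℝ → ℝ) (A : ℝ → ℝ → ℝ) (ξ t : ℝ) : ℝ :=
  ∫ η in (0:ℝ)..ξ, w η * oddPow p (strain lam s₀ w A η t)

/-- The class of functions `A` in which the fixed point is sought. -/
def Adm (M : ℝ) (A : ℝ → ℝ → ℝ) : Prop :=
  Continuous (Function.uncurry A) ∧ ∀ ξ t, |A ξ t| ≤ M * |t|

section
variable {p lam M L : ℝ} {g s₀ w : ℝ → ℝ} {A B : ℝ → ℝ → ℝ}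

lemma LagData.M_nonneg (h : LagData p lam M L g s₀ w) : 0 ≤ M := (abs_nonneg _).trans (h.g_bd 0)

lemma LagData.L_nonneg (h : LagData p lam M L g s₀ w) : 0 ≤ L := by
  have := (abs_nonneg _).trans (h.g_lip 1 0)
  simpa using this

lemma LagData.ct_pos (h : LagData p lam M L g s₀ w) (t : ℝ) : 1 ≤ 1 + lam * M * |t| := by
  have := h.M_nonneg
  have := h.hlam
  have : 0 ≤ lam * M * |t| := by positivity
  linarith

lemma LagData.g_cont (h : LagData p lam M L g s₀ w) : Continuous g := by
  refine LipschitzWith.continuous (K := ⟨L, h.L_nonneg⟩) (LipschitzWith.of_dist_le_mul fun a b => ?_)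
  exact h.g_lip a b

lemma LagData.strain_le (h : LagData p lam M L g s₀ w) (hA : Adm M A) (ξ t : ℝ) :
    |strain lam s₀ w A ξ t| ≤ (1 + |w ξ|) * (1 + lam * M * |t|) := by
  have h1 : |lam * w ξ * A ξ t| ≤ lam * |w ξ| * (M * |t|) := by
    rw [abs_mul, abs_mul, abs_of_pos h.hlam]
    have := hA.2 ξ t
    have := h.hlam
    gcongr
  have h2 : |s₀ ξ| ≤ 1 := by rw [abs_of_nonneg (h.s_nonneg ξ)]; exact h.s_le ξ
  have h3 := abs_add_le (s₀ ξ) (lam * w ξ * A ξ t)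
  have h4 := h.M_nonneg
  have h5 := h.hlam
  have h6 : 0 ≤ lam * M * |t| := by positivity
  unfold strain
  nlinarith [abs_nonneg (w ξ)]

lemma LagData.flux_le (h : LagData p lam M L g s₀ w) (hA : Adm M A) (ξ t : ℝ) :
    |w ξ * oddPow p (strain lam s₀ w A ξ t)|
      ≤ (1 + lam * M * |t|) ^ (p - 1) * (1 + |w ξ|) ^ p := by
  have hp := h.hp
  have hc := h.ct_pos t
  have hw : 0 < 1 + |w ξ| := by positivity
  rw [abs_mul, abs_oddPow hp]
  calc |w ξ| * |strain lam s₀ w A ξ t| ^ (p - 1)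
      ≤ (1 + |w ξ|) * ((1 + |w ξ|) * (1 + lam * M * |t|)) ^ (p - 1) := by
        have := h.strain_le hA ξ t
        gcongr
        · linarith
        · linarith
    _ = (1 + lam * M * |t|) ^ (p - 1) * ((1 + |w ξ|) ^ (p - 1) * (1 + |w ξ|)) := by
        rw [Real.mul_rpow hw.le (by linarith)]; ring
    _ = _ := by rw [← Real.rpow_add_one hw.ne']; ring_nf

lemma LagData.strainPow_le (h : LagData p lam M L g s₀ w) (hA : Adm M A) (ξ t : ℝ) :
    |strain lam s₀ w A ξ t| ^ p ≤ (1 + lam * M * |t|) ^ p * (1 + |w ξ|) ^ p := by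
  have hp := h.hp
  have hc := h.ct_pos t
  have hw : 0 < 1 + |w ξ| := by positivity
  rw [← Real.mul_rpow (by linarith) hw.le, mul_comm (1 + lam * M * |t|)]
  have := h.strain_le hA ξ t
  gcongr

lemma LagData.strain_meas₂ (h : LagData p lam M L g s₀ w) (hA : Adm M A) :
    Measurable (fun q : ℝ × ℝ => strain lam s₀ w A q.1 q.2) := by
  have h1 := hA.1.measurable
  have h2 := h.s_meas
  have h3 := h.w_meas
  have h4 : Measurable (fun q : ℝ × ℝ => A q.1 q.2) := h1
  unfold strain
  fun_prop

lemma LagData.strain_meas (h : LagData p lam M L g s₀ w) (hA : Adm M A) (t : ℝ) :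
    Measurable (fun ξ => strain lam s₀ w A ξ t) :=
  (h.strain_meas₂ hA).comp (measurable_id.prodMk measurable_const)

lemma LagData.flux_meas (h : LagData p lam M L g s₀ w) (hA : Adm M A) (t : ℝ) :
    Measurable (fun ξ => w ξ * oddPow p (strain lam s₀ w A ξ t)) :=
  h.w_meas.mul ((continuous_oddPow h.hp).measurable.comp (h.strain_meas hA t))

lemma LagData.strainPow_meas (h : LagData p lam M L g s₀ w) (hA : Adm M A) (t : ℝ) :
    Measurable (fun ξ => |strain lam s₀ w A ξ t| ^ p) :=
  (continuous_absPow (by linarith [h.hp])).measurable.comp (h.strain_meas hA t)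

lemma LagData.flux_int (h : LagData p lam M L g s₀ w) (hA : Adm M A) (t a b : ℝ) :
    IntervalIntegrable (fun ξ => w ξ * oddPow p (strain lam s₀ w A ξ t)) volume a b := by
  refine ((h.K_int a b).const_mul ((1 + lam * M * |t|) ^ (p - 1))).mono_fun
    (h.flux_meas hA t).aestronglyMeasurable (ae_of_all _ fun ξ => ?_)
  exact (h.flux_le hA ξ t).trans (le_abs_self _)

lemma LagData.strainPow_int (h : LagData p lam M L g s₀ w) (hA : Adm M A) (t a b : ℝ) :
    IntervalIntegrable (fun ξ => |strain lam s₀ w A ξ t| ^ p) volume a b := by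
  refine ((h.K_int a b).const_mul ((1 + lam * M * |t|) ^ p)).mono_fun
    (h.strainPow_meas hA t).aestronglyMeasurable (ae_of_all _ fun ξ => ?_)
  show ‖|strain lam s₀ w A ξ t| ^ p‖ ≤ ‖(1 + lam * M * |t|) ^ p * (1 + |w ξ|) ^ p‖
  rw [Real.norm_eq_abs, abs_of_nonneg (by positivity)]
  exact (h.strainPow_le hA ξ t).trans (le_abs_self _)

/-- The primitive of `(1 + |w|)^p`, which controls the variation in the label `ξ` of `U`, `A` and
the positions. -/
noncomputable def modulus (p : ℝ) (w : ℝ → ℝ) (ξ : ℝ) : ℝ := ∫ η in (0:ℝ)..ξ, (1 + |w η|) ^ p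

lemma LagData.modulus_cont (h : LagData p lam M L g s₀ w) : Continuous (modulus p w) :=
  intervalIntegral.continuous_primitive h.K_int 0

lemma LagData.modulus_sub (h : LagData p lam M L g s₀ w) (ξ η : ℝ) :
    modulus p w ξ - modulus p w η = ∫ y in η..ξ, (1 + |w y|) ^ p :=
  intervalIntegral.integral_interval_sub_left (h.K_int _ _) (h.K_int _ _)

lemma abs_integral_le_modulus (h : LagData p lam M L g s₀ w) {φ : ℝ → ℝ} {c : ℝ} (hc : 0 ≤ c)
    (hφ : ∀ y, |φ y| ≤ c * (1 + |w y|) ^ p) (ξ η : ℝ) :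
    |∫ y in η..ξ, φ y| ≤ c * |modulus p w ξ - modulus p w η| := by
  have := intervalIntegral.norm_integral_le_abs_of_norm_le (μ := volume) (a := η) (b := ξ)
    (f := φ) (g := fun y => c * (1 + |w y|) ^ p) (ae_of_all _ fun y => hφ y)
    ((h.K_int _ _).const_mul c)
  rw [intervalIntegral.integral_const_mul, abs_mul, abs_of_nonneg hc, ← h.modulus_sub] at this
  exact this

lemma LagData.lagU_sub_le (h : LagData p lam M L g s₀ w) (hA : Adm M A) (ξ η t : ℝ) :
    |lagU p lam s₀ w A ξ t - lagU p lam s₀ w A η t|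
      ≤ (1 + lam * M * |t|) ^ (p - 1) * |modulus p w ξ - modulus p w η| := by
  unfold lagU
  rw [intervalIntegral.integral_interval_sub_left (h.flux_int hA _ _ _) (h.flux_int hA _ _ _)]
  have := h.ct_pos t
  exact abs_integral_le_modulus h (by positivity) (fun y => h.flux_le hA y t) ξ η

lemma LagData.strain_cont (hA : Adm M A) (ξ : ℝ) :
    Continuous (fun t => strain lam s₀ w A ξ t) := by
  have : Continuous (fun t => A ξ t) := hA.1.comp (by fun_prop : Continuous fun t : ℝ => (ξ, t))
  unfold strain
  fun_prop

lemma LagData.lagU_cont (h : LagData p lam M L g s₀ w) (hA : Adm M A) :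
    Continuous (Function.uncurry (lagU p lam s₀ w A)) := by
  have hp := h.hp
  refine continuous_uncurry_of_modulus (C := fun t => (1 + lam * M * |t|) ^ (p - 1))
    (G := modulus p w) ?_ h.modulus_cont (fun ξ => ?_) (fun ξ η t => h.lagU_sub_le hA ξ η t)
  · exact Continuous.rpow_const (by fun_prop) fun t => Or.inr (by linarith)
  · rw [continuous_iff_continuousAt]
    intro t₀
    refine intervalIntegral.continuousAt_of_dominated_interval
      (bound := fun y => (1 + lam * M * (|t₀| + 1)) ^ (p - 1) * (1 + |w y|) ^ p)
      (Eventually.of_forall fun t => (h.flux_meas hA t).aestronglyMeasurable) ?_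
      ((h.K_int _ _).const_mul _) (ae_of_all _ fun y _ => ?_)
    · have : ∀ᶠ t in 𝓝 t₀, |t| < |t₀| + 1 :=
        continuous_abs.continuousAt.eventually_lt_const (by linarith)
      filter_upwards [this] with t ht
      refine ae_of_all _ fun y _ => (h.flux_le hA y t).trans ?_
      have := h.ct_pos t
      have := h.hlam
      have := h.M_nonneg
      gcongr
      linarith
    · exact (continuous_const.mul ((continuous_oddPow hp).comp
        (LagData.strain_cont hA y))).continuousAt

/-- Lipschitz dependence of `U` on `A`, at a fixed time and for labels in `[-R, R]`. -/
lemma LagData.lagU_diff_le (h : LagData p lam M L g s₀ w) (hA : Adm M A) (hB : Adm M B)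
    {R D t : ℝ} (hD : ∀ η, |η| ≤ R → |A η t - B η t| ≤ D) {ξ : ℝ} (hξ : |ξ| ≤ R) :
    |lagU p lam s₀ w A ξ t - lagU p lam s₀ w B ξ t|
      ≤ (p - 1) * lam * (1 + lam * M * |t|) ^ (p - 2) * (modulus p w R - modulus p w (-R)) * D := by
  have hp := h.hp
  have hlam := h.hlam
  have hc := h.ct_pos t
  have hD0 : 0 ≤ D := (abs_nonneg _).trans (hD ξ hξ)
  unfold lagU
  rw [← intervalIntegral.integral_sub (h.flux_int hA _ _ _) (h.flux_int hB _ _ _)]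
  have hb := intervalIntegral.norm_integral_le_abs_of_norm_le (μ := volume) (a := 0) (b := ξ)
    (f := fun y => w y * oddPow p (strain lam s₀ w A y t) - w y * oddPow p (strain lam s₀ w B y t))
    (g := fun y => ((p - 1) * lam * (1 + lam * M * |t|) ^ (p - 2) * D) * (1 + |w y|) ^ p) ?_
    ((h.K_int _ _).const_mul _)
  · rw [intervalIntegral.integral_const_mul, abs_mul, abs_of_nonneg, ← h.modulus_sub] at hb
    · refine hb.trans ?_
      have hmono : Monotone (modulus p w) := fun a b hab => by
        have : 0 ≤ modulus p w b - modulus p w a := by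
          rw [h.modulus_sub]
          exact intervalIntegral.integral_nonneg hab fun x _ => by positivity
        linarith
      have hR := abs_le.1 hξ
      have h0 : |(0:ℝ)| ≤ R := by simpa using (abs_nonneg ξ).trans hξ
      have h0 := abs_le.1 h0
      have h1 : |modulus p w ξ - modulus p w 0| ≤ modulus p w R - modulus p w (-R) := by
        have := hmono hR.1
        have := hmono hR.2
        have := hmono h0.1
        have := hmono h0.2
        rw [abs_le]; constructor <;> linarith
      calc _ ≤ ((p - 1) * lam * (1 + lam * M * |t|) ^ (p - 2) * D) *
            (modulus p w R - modulus p w (-R)) := by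
              refine mul_le_mul_of_nonneg_left h1 ?_
              have : 0 ≤ p - 1 := by linarith
              positivity
        _ = _ := by ring
    · have : 0 ≤ p - 1 := by linarith
      positivity
  · refine (ae_restrict_iff' measurableSet_uIoc).2 (ae_of_all _ fun y hy => ?_)
    have hy' : |y| ≤ R := by
      rcases mem_uIoc.1 hy with hy | hy
      · rw [abs_of_pos hy.1]; exact hy.2.trans ((le_abs_self _).trans hξ)
      · rw [abs_of_nonpos hy.2]
        exact (neg_le_neg hy.1.le).trans ((neg_le_abs _).trans hξ)
    have hw : 0 < 1 + |w y| := by positivity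
    rw [← mul_sub, Real.norm_eq_abs, abs_mul]
    have h1 := abs_oddPow_sub_le hp (h.strain_le hA y t) (h.strain_le hB y t)
    have h2 : |strain lam s₀ w A y t - strain lam s₀ w B y t| ≤ lam * (1 + |w y|) * D := by
      have : strain lam s₀ w A y t - strain lam s₀ w B y t = lam * w y * (A y t - B y t) := by
        unfold strain; ring
      rw [this, abs_mul, abs_mul, abs_of_pos hlam]
      have := hD y hy'
      gcongr
      linarith
    have hp1 : 0 ≤ p - 1 := by linarith
    calc |w y| * |oddPow p (strain lam s₀ w A y t) - oddPow p (strain lam s₀ w B y t)|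
        ≤ (1 + |w y|) * ((p - 1) * ((1 + |w y|) * (1 + lam * M * |t|)) ^ (p - 2)
            * (lam * (1 + |w y|) * D)) := by
          gcongr
          · linarith
          · refine h1.trans ?_
            gcongr
      _ = (p - 1) * lam * (1 + lam * M * |t|) ^ (p - 2) * D
            * ((1 + |w y|) ^ (p - 2) * (1 + |w y|) ^ (2:ℕ)) := by
          rw [Real.mul_rpow hw.le (by linarith)]; ring
      _ = _ := by
          rw [← Real.rpow_natCast (1 + |w y|) 2, ← Real.rpow_add hw]; norm_num

/-- The Picard map `A ↦ ∫₀ᵗ g(U) dτ`. -/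
noncomputable def picard (p lam : ℝ) (g s₀ w : ℝ → ℝ) (A : ℝ → ℝ → ℝ) (ξ t : ℝ) : ℝ :=
  ∫ τ in (0:ℝ)..t, g (lagU p lam s₀ w A ξ τ)

lemma LagData.gU_cont (h : LagData p lam M L g s₀ w) (hA : Adm M A) (ξ : ℝ) :
    Continuous (fun τ => g (lagU p lam s₀ w A ξ τ)) :=
  h.g_cont.comp ((h.lagU_cont hA).comp (by fun_prop : Continuous fun t : ℝ => (ξ, t)))

lemma LagData.picard_sub_time (h : LagData p lam M L g s₀ w) (hA : Adm M A) (ξ t t' : ℝ) :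
    |picard p lam g s₀ w A ξ t - picard p lam g s₀ w A ξ t'| ≤ M * |t - t'| := by
  unfold picard
  rw [intervalIntegral.integral_interval_sub_left
    ((h.gU_cont hA ξ).intervalIntegrable _ _) ((h.gU_cont hA ξ).intervalIntegrable _ _)]
  exact intervalIntegral.norm_integral_le_of_norm_le_const (a := t') (b := t)
    (f := fun τ => g (lagU p lam s₀ w A ξ τ)) (C := M) fun x _ => h.g_bd _

lemma LagData.picard_sub_label (h : LagData p lam M L g s₀ w) (hA : Adm M A) (ξ η t : ℝ) :
    |picard p lam g s₀ w A ξ t - picard p lam g s₀ w A η t|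
      ≤ (L * (1 + lam * M * |t|) ^ (p - 1) * |t|) * |modulus p w ξ - modulus p w η| := by
  have hp := h.hp
  unfold picard
  rw [← intervalIntegral.integral_sub
    ((h.gU_cont hA ξ).intervalIntegrable _ _) ((h.gU_cont hA η).intervalIntegrable _ _)]
  have := intervalIntegral.norm_integral_le_of_norm_le_const (a := 0) (b := t)
    (f := fun x => g (lagU p lam s₀ w A ξ x) - g (lagU p lam s₀ w A η x))
    (C := L * ((1 + lam * M * |t|) ^ (p - 1) * |modulus p w ξ - modulus p w η|)) ?_
  · refine this.trans (le_of_eq ?_)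
    rw [sub_zero]; ring
  · intro τ hτ
    have hτ' : |τ| ≤ |t| := by
      rcases mem_uIoc.1 hτ with hy | hy
      · rw [abs_of_pos hy.1]; exact hy.2.trans (le_abs_self _)
      · rw [abs_of_nonpos hy.2]
        exact (neg_le_neg hy.1.le).trans (neg_le_abs _)
    refine (h.g_lip _ _).trans (mul_le_mul_of_nonneg_left ?_ h.L_nonneg)
    refine (h.lagU_sub_le hA ξ η τ).trans ?_
    have := h.ct_pos τ
    have := h.hlam
    have := h.M_nonneg
    gcongr
    linarith

lemma LagData.adm_picard (h : LagData p lam M L g s₀ w) (hA : Adm M A) :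
    Adm M (picard p lam g s₀ w A) := by
  refine ⟨?_, fun ξ t => ?_⟩
  · have : Continuous (fun q : (ℝ × ℝ) × ℝ => g (lagU p lam s₀ w A q.1.1 q.2)) :=
      h.g_cont.comp ((h.lagU_cont hA).comp
        (by fun_prop : Continuous fun q : (ℝ × ℝ) × ℝ => (q.1.1, q.2)))
    exact intervalIntegral.continuous_parametric_intervalIntegral_of_continuous
      (f := fun (q : ℝ × ℝ) τ => g (lagU p lam s₀ w A q.1 τ)) this continuous_snd
  · have := h.picard_sub_time hA ξ t 0
    simpa [picard] using this

lemma abs_integral_le_exp {φ : ℝ → ℝ} {D k t : ℝ} (hk : 0 < k) (hD : 0 ≤ D)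
    (hφ : ∀ τ, |τ| ≤ |t| → |φ τ| ≤ D * exp (k * |τ|)) :
    |∫ τ in (0:ℝ)..t, φ τ| ≤ D / k * exp (k * |t|) := by
  have key : ∀ (ψ : ℝ → ℝ) (s : ℝ), 0 ≤ s → (∀ τ, |τ| ≤ s → |ψ τ| ≤ D * exp (k * |τ|)) →
      |∫ τ in (0:ℝ)..s, ψ τ| ≤ D / k * exp (k * s) := by
    intro ψ s hs hψ
    have hd : ∀ x ∈ uIcc 0 s, HasDerivAt (fun τ => D / k * exp (k * τ)) (D * exp (k * x)) x :=
      fun x _ => by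
        have := (((hasDerivAt_id x).const_mul k).exp).const_mul (D / k)
        refine this.congr_deriv ?_
        simp; field_simp
    have hi : IntervalIntegrable (fun τ => D * exp (k * τ)) volume 0 s :=
      (by fun_prop : Continuous (fun τ => D * exp (k * τ))).intervalIntegrable _ _
    have h1 := intervalIntegral.norm_integral_le_of_norm_le (f := ψ) hs
      (g := fun τ => D * exp (k * τ)) (ae_of_all volume fun τ hτ => by
        have := hψ τ (by rw [abs_of_pos hτ.1]; exact hτ.2)
        rwa [abs_of_pos hτ.1] at this) hi
    rw [intervalIntegral.integral_eq_sub_of_hasDerivAt hd hi] at h1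
    refine h1.trans ?_
    have : 0 ≤ D / k := by positivity
    simpa using this
  rcases le_total 0 t with ht | ht
  · rw [abs_of_nonneg ht] at hφ ⊢
    exact key φ t ht hφ
  · rw [abs_of_nonpos ht] at hφ ⊢
    have h1 := key (fun τ => φ (-τ)) (-t) (by linarith) fun τ hτ => by
      simpa using hφ (-τ) (by simpa using hτ)
    have h2 : ∫ τ in (0:ℝ)..(-t), φ (-τ) = - ∫ τ in (0:ℝ)..t, φ τ := by
      rw [intervalIntegral.integral_comp_neg (fun τ => φ τ), intervalIntegral.integral_symm]
      simp
    rw [h2, abs_neg] at h1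
    exact h1

/-- Global solvability of the Lagrangian system by Picard iteration, with the a priori modulus of
continuity in the label. -/
theorem LagData.exists_fixedPoint (h : LagData p lam M L g s₀ w) :
    ∃ A : ℝ → ℝ → ℝ, Adm M A ∧
      (∀ ξ t, A ξ t = ∫ τ in (0:ℝ)..t, g (lagU p lam s₀ w A ξ τ)) ∧
      ∀ ξ η t, |A ξ t - A η t|
        ≤ (L * (1 + lam * M * |t|) ^ (p - 1) * |t|) * |modulus p w ξ - modulus p w η| := by
  have hp := h.hp
  have hlam := h.hlam
  have hM := h.M_nonneg
  have hL := h.L_nonneg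
  set T := picard p lam g s₀ w with hT
  let a : ℕ → ℝ → ℝ → ℝ := fun n => T^[n] (fun _ _ => 0)
  have ha : ∀ n, a (n + 1) = T (a n) := fun n => Function.iterate_succ_apply' T n _
  have hadm : ∀ n, Adm M (a n) := by
    intro n
    induction n with
    | zero => exact ⟨continuous_const, fun ξ t => by simpa [a] using by positivity⟩
    | succ n ih => rw [ha]; exact h.adm_picard ih
  -- geometric convergence in the weighted norm `sup e^{-k|t|} |A|` on each box
  have hgeo : ∀ R T₀ : ℝ, 0 ≤ R → 0 ≤ T₀ → ∃ k : ℝ, ∀ n ξ t, |ξ| ≤ R → |t| ≤ T₀ →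
      |a (n + 1) ξ t - a n ξ t| ≤ M * T₀ * (1 / 2) ^ n * exp (k * |t|) := by
    intro R T₀ hR hT₀
    set c := L * ((p - 1) * lam * (1 + lam * M * T₀) ^ (p - 2) *
      (modulus p w R - modulus p w (-R))) with hc
    have hmod : 0 ≤ modulus p w R - modulus p w (-R) := by
      rw [h.modulus_sub]
      exact intervalIntegral.integral_nonneg (by linarith) fun x _ => by positivity
    have hc0 : 0 ≤ c := by
      have : 0 ≤ p - 1 := by linarith
      positivity
    refine ⟨2 * c + 1, fun n => ?_⟩
    induction n with
    | zero =>
      intro ξ t _ ht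
      have h1 := (hadm 1).2 ξ t
      have h2 : a 0 ξ t = 0 := rfl
      have h3 : (1:ℝ) ≤ exp ((2 * c + 1) * |t|) := Real.one_le_exp (by positivity)
      rw [h2, sub_zero, pow_zero, mul_one]
      calc |a (0 + 1) ξ t| ≤ M * |t| := h1
        _ ≤ M * T₀ * 1 := by rw [mul_one]; gcongr
        _ ≤ _ := by gcongr
    | succ n ih =>
      intro ξ t hξ ht
      have e1 : a (n + 1 + 1) ξ t - a (n + 1) ξ t = ∫ τ in (0:ℝ)..t,
          (g (lagU p lam s₀ w (a (n + 1)) ξ τ) - g (lagU p lam s₀ w (a n) ξ τ)) := by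
        rw [show a (n + 1 + 1) ξ t = T (a (n + 1)) ξ t by rw [ha (n + 1)],
          show a (n + 1) ξ t = T (a n) ξ t by rw [ha n]]
        exact (intervalIntegral.integral_sub ((h.gU_cont (hadm _) ξ).intervalIntegrable _ _)
          ((h.gU_cont (hadm _) ξ).intervalIntegrable _ _)).symm
      rw [e1]
      refine (abs_integral_le_exp (k := 2 * c + 1) (D := c * (M * T₀ * (1 / 2) ^ n))
        (by positivity) (by positivity) fun τ hτ => ?_).trans ?_
      · have hτ0 : |τ| ≤ T₀ := hτ.trans ht
        have h1 := h.lagU_diff_le (hadm (n + 1)) (hadm n) (R := R) (t := τ)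
          (fun η hη => ih η τ hη hτ0) hξ
        refine (h.g_lip _ _).trans ((mul_le_mul_of_nonneg_left h1 hL).trans ?_)
        have h2 : (1 + lam * M * |τ|) ^ (p - 2) ≤ (1 + lam * M * T₀) ^ (p - 2) := by
          have := h.ct_pos τ
          gcongr
        have hp1 : 0 ≤ p - 1 := by linarith
        calc _ ≤ L * ((p - 1) * lam * (1 + lam * M * T₀) ^ (p - 2) *
              (modulus p w R - modulus p w (-R)) *
                (M * T₀ * (1 / 2) ^ n * exp ((2 * c + 1) * |τ|))) := by gcongr
          _ = _ := by rw [hc]; ring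
      · have h3 : c / (2 * c + 1) ≤ 1 / 2 := by
          rw [div_le_iff₀ (by positivity)]; linarith
        calc c * (M * T₀ * (1 / 2) ^ n) / (2 * c + 1) * exp ((2 * c + 1) * |t|)
            = c / (2 * c + 1) * (M * T₀ * (1 / 2) ^ n * exp ((2 * c + 1) * |t|)) := by ring
          _ ≤ 1 / 2 * (M * T₀ * (1 / 2) ^ n * exp ((2 * c + 1) * |t|)) := by gcongr
          _ = _ := by ring
  have hlim : ∀ ξ t, ∃ x, Tendsto (fun n => a n ξ t) atTop (𝓝 x) := by
    intro ξ t
    obtain ⟨k, hk⟩ := hgeo |ξ| |t| (abs_nonneg _) (abs_nonneg _)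
    refine cauchySeq_tendsto_of_complete (cauchySeq_of_le_geometric (1/2)
      (M * |t| * exp (k * |t|)) (by norm_num) fun n => ?_)
    rw [dist_comm, Real.dist_eq]
    refine (hk n ξ t le_rfl le_rfl).trans (le_of_eq ?_)
    ring
  choose A hA using hlim
  have hbd : ∀ ξ t, |A ξ t| ≤ M * |t| := fun ξ t =>
    le_of_tendsto (hA ξ t).abs (Eventually.of_forall fun n => (hadm n).2 ξ t)
  have hlabel : ∀ ξ η t, |A ξ t - A η t|
        ≤ (L * (1 + lam * M * |t|) ^ (p - 1) * |t|) * |modulus p w ξ - modulus p w η| :=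
    fun ξ η t => le_of_tendsto (((hA ξ t).sub (hA η t)).abs.comp (tendsto_add_atTop_nat 1))
      (Eventually.of_forall fun n => by
        simp only [Function.comp, ha]
        exact h.picard_sub_label (hadm n) ξ η t)
  have htime : ∀ ξ t t', |A ξ t - A ξ t'| ≤ M * |t - t'| :=
    fun ξ t t' => le_of_tendsto (((hA ξ t).sub (hA ξ t')).abs.comp (tendsto_add_atTop_nat 1))
      (Eventually.of_forall fun n => by
        simp only [Function.comp, ha]
        exact h.picard_sub_time (hadm n) ξ t t')
  have hcont : Continuous (Function.uncurry A) := by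
    refine continuous_uncurry_of_modulus (C := fun t => L * (1 + lam * M * |t|) ^ (p - 1) * |t|)
      (G := modulus p w) ?_ h.modulus_cont (fun ξ => ?_) hlabel
    · have : Continuous (fun t : ℝ => (1 + lam * M * |t|) ^ (p - 1)) :=
        Continuous.rpow_const (by fun_prop) fun t => Or.inr (by linarith)
      fun_prop
    · exact LipschitzWith.continuous (K := ⟨M, hM⟩)
        (LipschitzWith.of_dist_le_mul fun t t' => htime ξ t t')
  have hAdm : Adm M A := ⟨hcont, hbd⟩
  refine ⟨A, hAdm, fun ξ t => ?_, hlabel⟩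
  have hU : ∀ τ, Tendsto (fun n => lagU p lam s₀ w (a n) ξ τ) atTop
      (𝓝 (lagU p lam s₀ w A ξ τ)) := fun τ => by
    refine intervalIntegral.tendsto_integral_filter_of_dominated_convergence
      (fun y => (1 + lam * M * |τ|) ^ (p - 1) * (1 + |w y|) ^ p)
      (Eventually.of_forall fun n => (h.flux_meas (hadm n) τ).aestronglyMeasurable)
      (Eventually.of_forall fun n => ae_of_all _ fun y _ => h.flux_le (hadm n) y τ)
      ((h.K_int _ _).const_mul _) (ae_of_all _ fun y _ => ?_)
    refine (((continuous_oddPow hp).tendsto _).comp ?_).const_mul _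
    exact ((hA y τ).const_mul _).const_add _
  have h1 : Tendsto (fun n => a (n + 1) ξ t) atTop
      (𝓝 (∫ τ in (0:ℝ)..t, g (lagU p lam s₀ w A ξ τ))) := by
    simp only [ha]
    refine intervalIntegral.tendsto_integral_filter_of_dominated_convergence (fun _ => M)
      (Eventually.of_forall fun n => (h.gU_cont (hadm n) ξ).aestronglyMeasurable)
      (Eventually.of_forall fun n => ae_of_all _ fun y _ => h.g_bd _)
      intervalIntegrable_const (ae_of_all _ fun y _ => ?_)
    exact (h.g_cont.tendsto _).comp (hU y)
  exact tendsto_nhds_unique ((hA ξ t).comp (tendsto_add_atTop_nat 1)) h1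

end

/-! ### Integrals under a monotone change of variables -/

/-- The change of variables of `map_withDensity_primitive`, localised to an interval. -/
lemma map_withDensity_primitive_restrict {X q : ℝ → ℝ} (hq0 : ∀ ξ, 0 ≤ q ξ)
    (hqi : ∀ a b, IntervalIntegrable q volume a b)
    (hX : ∀ a b, X b - X a = ∫ ξ in a..b, q ξ) (hXc : Continuous X)
    (hsurj : Function.Surjective X) (a b : ℝ) :
    Measure.map X ((volume.withDensity fun ξ => ENNReal.ofReal (q ξ)).restrict (Ioc a b))
      = volume.restrict (Ioc (X a) (X b)) := by
  set μ := volume.withDensity fun ξ => ENNReal.ofReal (q ξ) with hμ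
  have hmap : Measure.map X μ = volume := map_withDensity_primitive hq0 hqi hX hXc hsurj
  have hmono : Monotone X := fun a b hab => by
    have : 0 ≤ X b - X a := by
      rw [hX]; exact intervalIntegral.integral_nonneg hab fun x _ => hq0 x
    linarith
  have hpt : ∀ c, ∀ᵐ ξ ∂μ, X ξ ≠ c := fun c => by
    have h1 : ∀ᵐ x ∂(Measure.map X μ), x ≠ c := by
      rw [hmap]; exact Measure.ae_ne volume c
    exact ae_of_ae_map hXc.aemeasurable h1
  have hset : Ioc a b =ᵐ[μ] X ⁻¹' Ioc (X a) (X b) := by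
    filter_upwards [hpt (X a), hpt (X b)] with ξ h1 h2
    refine propext ⟨fun h => ⟨lt_of_le_of_ne (hmono h.1.le) (Ne.symm h1), hmono h.2⟩,
      fun h => ⟨?_, ?_⟩⟩
    · by_contra hlt
      exact absurd (hmono (not_lt.1 hlt)) (not_le.2 h.1)
    · by_contra hlt
      exact h2 (le_antisymm h.2 (hmono (not_le.1 hlt).le))
  rw [Measure.restrict_congr_set hset, ← Measure.restrict_map hXc.measurable measurableSet_Ioc,
    hmap]

lemma lintegral_comp_primitive {X q : ℝ → ℝ} (hq0 : ∀ ξ, 0 ≤ q ξ) (hqm : Measurable q)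
    (hqi : ∀ a b, IntervalIntegrable q volume a b)
    (hX : ∀ a b, X b - X a = ∫ ξ in a..b, q ξ) (hXc : Continuous X)
    (hsurj : Function.Surjective X) {G : ℝ → ENNReal} (hG : Measurable G) (a b : ℝ) :
    ∫⁻ ξ in Ioc a b, ENNReal.ofReal (q ξ) * G (X ξ) = ∫⁻ x in Ioc (X a) (X b), G x := by
  rw [← map_withDensity_primitive_restrict hq0 hqi hX hXc hsurj a b,
    lintegral_map hG hXc.measurable, restrict_withDensity measurableSet_Ioc]
  exact (lintegral_withDensity_eq_lintegral_mul _ (by fun_prop) (hG.comp hXc.measurable)).symm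

lemma setIntegral_comp_primitive {X q : ℝ → ℝ} (hq0 : ∀ ξ, 0 ≤ q ξ) (hqm : Measurable q)
    (hqi : ∀ a b, IntervalIntegrable q volume a b)
    (hX : ∀ a b, X b - X a = ∫ ξ in a..b, q ξ) (hXc : Continuous X)
    (hsurj : Function.Surjective X) {G : ℝ → ℝ} (hG : Measurable G) (a b : ℝ) :
    ∫ ξ in Ioc a b, q ξ * G (X ξ) = ∫ x in Ioc (X a) (X b), G x := by
  rw [← map_withDensity_primitive_restrict hq0 hqi hX hXc hsurj a b,
    integral_map hXc.aemeasurable hG.aestronglyMeasurable, restrict_withDensity measurableSet_Ioc,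
    integral_withDensity_eq_integral_toReal_smul₀ (by fun_prop) (ae_of_all _ fun _ => ENNReal.ofReal_lt_top)]
  refine integral_congr_ae (ae_of_all _ fun ξ => ?_)
  simp [ENNReal.toReal_ofReal (hq0 ξ)]

/-! ### Label space with interleaved rarefaction labels -/

/-- The *material* labels: the negative half line and, in the block `[k, k+1)`, the first halves of
the `n k` cells of equal length. The second halves carry zero initial length. -/
def matSet (n : ℕ → ℕ) : Set ℝ := {ξ | ξ < 0 ∨ Int.fract ((n ⌊ξ⌋₊ : ℝ) * ξ) < 1 / 2}

/-- Half the length of a cell in the block `[k, k+1)`. -/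
noncomputable def cellHalf (n : ℕ → ℕ) (k : ℕ) : ℝ := 1 / (2 * n k)

lemma measurableSet_matSet (n : ℕ → ℕ) : MeasurableSet (matSet n) := by
  have h1 : Measurable (fun ξ : ℝ => (n ⌊ξ⌋₊ : ℝ)) :=
    (measurable_from_top (f := fun k : ℕ => (n k : ℝ))).comp Nat.measurable_floor
  exact measurableSet_Iio.union (measurableSet_lt ((h1.mul measurable_id).fract) measurable_const)

lemma floor_of_block {k : ℕ} {ξ : ℝ} (h : ξ ∈ Ico (k:ℝ) (k + 1)) : ⌊ξ⌋₊ = k :=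
  (Nat.floor_eq_iff ((Nat.cast_nonneg k).trans h.1)).2 h

/-- Translation by half a cell exchanges material and rarefaction labels within a block. -/
lemma shift_mem {n : ℕ → ℕ} {k : ℕ} (hn : 0 < n k) (ξ : ℝ) :
    (ξ + cellHalf n k ∈ Ico (k:ℝ) (k + 1) ∧ ξ + cellHalf n k ∉ matSet n) ↔
      (ξ ∈ Ico (k:ℝ) (k + 1) ∧ ξ ∈ matSet n) := by
  have hn' : (0:ℝ) < n k := by exact_mod_cast hn
  set δ := cellHalf n k with hδ
  have hδn : n k * δ = 1 / 2 := by rw [hδ, cellHalf]; field_simp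
  have hδ0 : 0 < δ := by rw [hδ, cellHalf]; positivity
  constructor
  · rintro ⟨h1, h2⟩
    have h3 : ¬ (ξ + δ < 0 ∨ Int.fract ((n ⌊ξ + δ⌋₊ : ℝ) * (ξ + δ)) < 1 / 2) := h2
    rw [floor_of_block h1] at h3
    push Not at h3
    have h4 := h3.2
    have h5 := Int.self_sub_floor ((n k : ℝ) * (ξ + δ))
    set m := ⌊(n k : ℝ) * (ξ + δ)⌋ with hm
    have h6 : (m:ℝ) ≤ n k * ξ := by nlinarith
    have h7 : ((k * n k : ℕ) : ℤ) ≤ m := by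
      rw [hm, Int.le_floor]; push_cast; nlinarith [h1.1]
    have h8 : (k:ℝ) * n k ≤ m := by exact_mod_cast h7
    have hb : ξ ∈ Ico (k:ℝ) (k + 1) := by
      refine ⟨?_, by linarith [h1.2]⟩
      by_contra hlt
      nlinarith [not_le.1 hlt]
    refine ⟨hb, Or.inr ?_⟩
    rw [floor_of_block hb]
    have h9 : ⌊(n k : ℝ) * ξ⌋ = m := by
      rw [Int.floor_eq_iff]
      refine ⟨h6, ?_⟩
      have := Int.lt_floor_add_one ((n k : ℝ) * (ξ + δ))
      nlinarith
    rw [← Int.self_sub_floor, h9]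
    have := Int.lt_floor_add_one ((n k : ℝ) * (ξ + δ))
    rw [← hm] at this
    nlinarith
  · rintro ⟨h1, h2⟩
    have h3 : Int.fract ((n k : ℝ) * ξ) < 1 / 2 := by
      rcases h2 with h2 | h2
      · exact absurd h1.1 (not_le.2 (h2.trans_le (Nat.cast_nonneg k)))
      · rwa [floor_of_block h1] at h2
    rw [← Int.self_sub_floor] at h3
    set m := ⌊(n k : ℝ) * ξ⌋ with hm
    have h5 : (m:ℝ) ≤ n k * ξ := Int.floor_le _
    have h6 : m < ((k + 1) * n k : ℕ) := by
      rw [hm, Int.floor_lt]; push_cast; nlinarith [h1.2]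
    have h7 : (m:ℝ) + 1 ≤ (k + 1) * n k := by exact_mod_cast h6
    have hb : ξ + δ ∈ Ico (k:ℝ) (k + 1) := by
      refine ⟨by linarith [h1.1], ?_⟩
      by_contra hlt
      nlinarith [not_lt.1 hlt]
    refine ⟨hb, ?_⟩
    rintro (h8 | h8)
    · exact absurd (hb.1) (not_le.2 (h8.trans_le (Nat.cast_nonneg k)))
    · rw [floor_of_block hb] at h8
      have h9 : ⌊(n k : ℝ) * (ξ + δ)⌋ = m := by
        rw [Int.floor_eq_iff]
        constructor <;> nlinarith
      rw [← Int.self_sub_floor, h9] at h8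
      nlinarith

/-- The initial strain: `1` on material labels and `0` on rarefaction labels. -/
noncomputable def matS (n : ℕ → ℕ) : ℝ → ℝ := (matSet n).indicator fun _ => 1

/-- The initial position of a label. -/
noncomputable def matX (n : ℕ → ℕ) (ξ : ℝ) : ℝ := ∫ η in (0:ℝ)..ξ, matS n η

/-- The product of strain and slope: on material labels the initial slope `v` at the initial
position; a rarefaction label copies the value of the material label half a cell to its left. -/
noncomputable def matW (n : ℕ → ℕ) (v : ℝ → ℝ) (ξ : ℝ) : ℝ :=
  open Classical in
  if ξ ∈ matSet n then v (matX n ξ) else v (matX n (ξ - cellHalf n ⌊ξ⌋₊))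

section
variable {n : ℕ → ℕ} {v : ℝ → ℝ}

lemma measurable_matS : Measurable (matS n) := measurable_const.indicator (measurableSet_matSet n)

lemma matS_nonneg (ξ : ℝ) : 0 ≤ matS n ξ := indicator_nonneg (fun _ _ => zero_le_one) _

lemma matS_le (ξ : ℝ) : matS n ξ ≤ 1 := indicator_le_self' (fun _ _ => zero_le_one) _

lemma matS_int (a b : ℝ) : IntervalIntegrable (matS n) volume a b :=
  (intervalIntegrable_const (c := (1:ℝ))).mono_fun measurable_matS.aestronglyMeasurable
    (ae_of_all _ fun ξ => by
      show ‖matS n ξ‖ ≤ ‖(1:ℝ)‖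
      rw [Real.norm_eq_abs, abs_of_nonneg (matS_nonneg ξ)]; simpa using matS_le ξ)

lemma matX_sub (a b : ℝ) : matX n b - matX n a = ∫ ξ in a..b, matS n ξ :=
  intervalIntegral.integral_interval_sub_left (matS_int _ _) (matS_int _ _)

lemma continuous_matX : Continuous (matX n) := intervalIntegral.continuous_primitive matS_int 0

lemma matX_sub_nonneg {a b : ℝ} (hab : a ≤ b) : matX n a ≤ matX n b := by
  have : 0 ≤ matX n b - matX n a := by
    rw [matX_sub]; exact intervalIntegral.integral_nonneg hab fun x _ => matS_nonneg x
  linarith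

lemma matX_sub_le {a b : ℝ} (hab : a ≤ b) : matX n b - matX n a ≤ b - a := by
  rw [matX_sub]
  have := intervalIntegral.integral_mono_on (μ := volume) hab (matS_int (n := n) a b)
    (intervalIntegrable_const (c := (1:ℝ))) fun x _ => matS_le x
  simpa using this

lemma matX_zero : matX n 0 = 0 := by simp [matX]

lemma matS_neg {ξ : ℝ} (h : ξ < 0) : matS n ξ = 1 :=
  indicator_of_mem (show ξ ∈ matSet n from Or.inl h) _

lemma matX_neg {ξ : ℝ} (h : ξ ≤ 0) : matX n ξ = ξ := by
  have : ∫ η in ξ..(0:ℝ), matS n η = ∫ η in ξ..(0:ℝ), (1:ℝ) := by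
    refine intervalIntegral.integral_congr_ae ?_
    filter_upwards [Measure.ae_ne volume (0:ℝ)] with x hx hx'
    rw [uIoc_of_le h] at hx'
    exact matS_neg (lt_of_le_of_ne hx'.2 hx)
  have h2 := matX_sub (n := n) ξ 0
  rw [this, matX_zero] at h2
  simp at h2
  linarith

lemma matW_neg (hv : ∀ x ≤ 0, v x = 0) {ξ : ℝ} (h : ξ < 0) : matW n v ξ = 0 := by
  rw [matW, if_pos (show ξ ∈ matSet n from Or.inl h), matX_neg h.le, hv _ h.le]

lemma matW_of_mem {ξ : ℝ} (h : ξ ∈ matSet n) : matW n v ξ = v (matX n ξ) := if_pos h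

lemma matW_shift {k : ℕ} (hn : 0 < n k) {ξ : ℝ} (h1 : ξ ∈ Ico (k:ℝ) (k + 1)) (h2 : ξ ∈ matSet n) :
    matW n v (ξ + cellHalf n k) = v (matX n ξ) := by
  have h := (shift_mem hn ξ).2 ⟨h1, h2⟩
  rw [matW, if_neg h.2, floor_of_block h.1, add_sub_cancel_right]

lemma measurable_matW (hv : Measurable v) : Measurable (matW n v) := by
  classical
  have h1 : Measurable (fun ξ : ℝ => cellHalf n ⌊ξ⌋₊) :=
    (measurable_from_top (f := cellHalf n)).comp Nat.measurable_floor
  have h2 := continuous_matX (n := n).measurable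
  refine Measurable.ite (measurableSet_matSet n) (hv.comp h2)
    (hv.comp (h2.comp (measurable_id.sub h1)))

/-- Material and rarefaction labels each occupy half of a block. -/
lemma volume_mat_block {k : ℕ} (hn : 0 < n k) :
    volume (Ico (k:ℝ) (k + 1) ∩ matSet n) = ENNReal.ofReal (1 / 2) := by
  have hm := measurableSet_matSet n
  have h1 : volume (Ico (k:ℝ) (k + 1) \ matSet n) = volume (Ico (k:ℝ) (k + 1) ∩ matSet n) := by
    rw [← measure_preimage_add_right volume (cellHalf n k) (Ico (k:ℝ) (k + 1) \ matSet n)]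
    congr 1
    ext ξ
    exact shift_mem hn ξ
  have h2 := measure_inter_add_sdiff (μ := volume) (Ico (k:ℝ) (k + 1)) hm
  rw [h1, Real.volume_Ico] at h2
  have h3 : volume (Ico (k:ℝ) (k + 1) ∩ matSet n) ≠ ⊤ :=
    ((measure_mono inter_subset_left).trans_lt (by simp)).ne
  lift volume (Ico (k:ℝ) (k + 1) ∩ matSet n) to NNReal using h3 with r
  have h4 : (r:ℝ) + r = 1 := by
    have := congrArg ENNReal.toReal h2
    rw [ENNReal.toReal_add ENNReal.coe_ne_top ENNReal.coe_ne_top] at this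
    simpa using this
  rw [ENNReal.ofReal, ENNReal.coe_inj]
  ext
  rw [Real.coe_toNNReal _ (by norm_num)]
  linarith

lemma matX_block (hn : ∀ k, 0 < n k) (k : ℕ) : (k:ℝ) / 2 ≤ matX n k := by
  induction k with
  | zero => simp [matX_zero]
  | succ k ih =>
    have h1 : matX n ((k:ℝ) + 1) - matX n k = 1 / 2 := by
      rw [matX_sub, intervalIntegral.integral_of_le (by linarith), ← integral_Ico_eq_integral_Ioc,
        matS, setIntegral_indicator (measurableSet_matSet n), setIntegral_const, measureReal_def,
        volume_mat_block (hn k), ENNReal.toReal_ofReal (by norm_num)]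
      simp
    push_cast
    linarith

lemma matX_surjective (hn : ∀ k, 0 < n k) : Function.Surjective (matX n) := by
  refine continuous_matX.surjective ?_ ?_
  · refine tendsto_atTop_mono' (f₁ := fun ξ : ℝ => ((⌊ξ⌋₊ : ℕ) : ℝ) / 2) _ ?_ ?_
    · filter_upwards [eventually_ge_atTop 0] with ξ h
      exact (matX_block hn _).trans (matX_sub_nonneg (Nat.floor_le h))
    · exact (tendsto_natCast_atTop_atTop.comp tendsto_nat_floor_atTop).atTop_div_const (by norm_num)
  · exact tendsto_id.congr' ((eventually_le_atBot 0).mono fun ξ h => (matX_neg h).symm)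

/-- The slopes carried by material labels in an interval. -/
lemma lintegral_mat (hn : ∀ k, 0 < n k) (hv : Measurable v) {G : ℝ → ENNReal} (hG : Measurable G)
    (a b : ℝ) : ∫⁻ ξ in Ioc a b ∩ matSet n, G (v (matX n ξ))
      = ∫⁻ x in Ioc (matX n a) (matX n b), G (v x) := by
  have hm := measurableSet_matSet n
  have h1 := lintegral_comp_primitive matS_nonneg measurable_matS matS_int matX_sub continuous_matX
    (matX_surjective hn) (hG.comp hv) a b
  simp only [Function.comp] at h1
  rw [← h1, inter_comm, ← setLIntegral_indicator hm]
  refine lintegral_congr fun ξ => ?_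
  by_cases h : ξ ∈ matSet n <;> simp [matS, h]

lemma lintegral_matW_block (hn : ∀ k, 0 < n k) (hv : Measurable v) {G : ℝ → ENNReal}
    (hG : Measurable G) (k : ℕ) (a b : ℝ) :
    ∫⁻ ξ in Ioc a b ∩ Ico (k:ℝ) (k + 1), G (matW n v ξ)
      ≤ (∫⁻ x in Ioc (matX n a) (matX n b), G (v x)) +
        ∫⁻ x in Ioc (matX n (a - cellHalf n k)) (matX n (b - cellHalf n k)), G (v x) := by
  have hm := measurableSet_matSet n
  have hsub : Ioc a b ∩ Ico (k:ℝ) (k + 1) ⊆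
      (Ioc a b ∩ matSet n) ∪ (Ioc a b ∩ (Ico (k:ℝ) (k + 1) \ matSet n)) := fun ξ hξ => by
    by_cases h : ξ ∈ matSet n
    · exact Or.inl ⟨hξ.1, h⟩
    · exact Or.inr ⟨hξ.1, hξ.2, h⟩
  refine (lintegral_mono_set hsub).trans ((lintegral_union_le _ _ _).trans (add_le_add ?_ ?_))
  · rw [← lintegral_mat hn hv hG]
    refine le_of_eq (setLIntegral_congr_fun (measurableSet_Ioc.inter hm) fun ξ hξ => ?_)
    simp only [matW_of_mem hξ.2]
  · rw [← lintegral_mat hn hv hG, ← lintegral_indicator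
      (measurableSet_Ioc.inter (measurableSet_Ico.diff hm)),
      ← lintegral_add_right_eq_self _ (cellHalf n k), ← lintegral_indicator
      (measurableSet_Ioc.inter hm)]
    refine lintegral_mono fun ξ => ?_
    by_cases h : ξ + cellHalf n k ∈ Ioc a b ∩ (Ico (k:ℝ) (k + 1) \ matSet n)
    · have h1 := (shift_mem (hn k) ξ).1 h.2
      have h2 : ξ ∈ Ioc (a - cellHalf n k) (b - cellHalf n k) ∩ matSet n :=
        ⟨⟨by linarith [h.1.1], by linarith [h.1.2]⟩, h1.2⟩
      rw [indicator_of_mem h, indicator_of_mem h2, matW_shift (hn k) h1.1 h1.2]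
    · rw [indicator_of_notMem h]
      exact zero_le

/-- Local integrability of the Lagrangian data. -/
lemma matW_int {p : ℝ} (hn : ∀ k, 0 < n k) (hv : Measurable v)
    (hv0 : ∀ x ≤ 0, v x = 0)
    (hvi : ∀ a b, IntervalIntegrable (fun x => (1 + |v x|) ^ p) volume a b) (a b : ℝ) :
    IntervalIntegrable (fun ξ => (1 + |matW n v ξ|) ^ p) volume a b := by
  have hmeas : Measurable (fun ξ => (1 + |matW n v ξ|) ^ p) := by
    have := measurable_matW (n := n) hv
    fun_prop
  have hG : Measurable (fun y : ℝ => ENNReal.ofReal ((1 + |y|) ^ p)) := by fun_prop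
  have hfin : ∀ a b, ∫⁻ x in Ioc a b, ENNReal.ofReal ((1 + |v x|) ^ p) < ⊤ := fun a b => by
    rcases le_or_gt b a with h | h
    · simp [Ioc_eq_empty_of_le h]
    have h1 := ((intervalIntegrable_iff_integrableOn_Ioc_of_le h.le).1 (hvi a b)).lintegral_lt_top
    exact h1
  have hblock : ∀ k : ℕ, IntegrableOn (fun ξ => (1 + |matW n v ξ|) ^ p) (Ico (k:ℝ) (k + 1)) := by
    intro k
    refine ⟨hmeas.aestronglyMeasurable, ?_⟩
    rw [hasFiniteIntegral_iff_ofReal (ae_of_all _ fun ξ => by positivity)]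
    have h1 := lintegral_matW_block hn hv hG k (k - 1) (k + 1)
    rw [inter_eq_right.2 (show Ico (k:ℝ) (k + 1) ⊆ Ioc ((k:ℝ) - 1) (k + 1) from
      fun ξ hξ => ⟨by linarith [hξ.1], hξ.2.le⟩)] at h1
    exact h1.trans_lt (ENNReal.add_lt_top.2 ⟨hfin _ _, hfin _ _⟩)
  have hpos : ∀ N : ℕ, IntegrableOn (fun ξ => (1 + |matW n v ξ|) ^ p) (Ico (0:ℝ) N) := by
    intro N
    induction N with
    | zero => simp
    | succ N ih =>
      push_cast
      rw [← Ico_union_Ico_eq_Ico (Nat.cast_nonneg N) (by linarith)]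
      exact ih.union (hblock N)
  have hneg : ∀ R : ℝ, IntegrableOn (fun ξ => (1 + |matW n v ξ|) ^ p) (Ico R 0) := fun R => by
    refine (integrableOn_const (C := (1:ℝ)) (by simp) (by simp)).congr_fun (fun ξ hξ => ?_)
      measurableSet_Ico
    simp [matW_neg hv0 hξ.2]
  obtain ⟨N, hN⟩ := exists_nat_gt (max a b)
  rw [intervalIntegrable_iff]
  refine ((hneg (min a b)).union (hpos N)).mono_set fun ξ hξ => ?_
  have h1 : min a b < ξ := hξ.1
  have h2 : ξ ≤ max a b := hξ.2
  rcases lt_or_ge ξ 0 with h | h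
  · exact Or.inl ⟨h1.le, h⟩
  · exact Or.inr ⟨h, h2.trans_lt hN⟩

/-- At time zero the Lagrangian profile reproduces the initial datum. -/
lemma integral_matW (hn : ∀ k, 0 < n k) (hv : Measurable v) {ξ : ℝ} (hξ : 0 ≤ ξ) {p : ℝ}  :
    ∫ η in (0:ℝ)..ξ, matW n v η * oddPow p (matS n η) = ∫ x in (0:ℝ)..matX n ξ, v x := by
  have h0 : (0:ℝ) ≤ matX n ξ := by rw [← matX_zero (n := n)]; exact matX_sub_nonneg hξ
  have h1 := setIntegral_comp_primitive matS_nonneg measurable_matS matS_int matX_sub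
    continuous_matX (matX_surjective hn) hv 0 ξ
  rw [intervalIntegral.integral_of_le hξ, intervalIntegral.integral_of_le h0]
  rw [matX_zero] at h1
  rw [← h1]
  refine integral_congr_ae (ae_of_all _ fun η => ?_)
  by_cases h : η ∈ matSet n
  · simp [matS, h, oddPow, matW_of_mem h]
  · simp [matS, h, oddPow]

end

/-! ### Non-collapse of blocks of labels -/

section
variable {n : ℕ → ℕ} {v : ℝ → ℝ} {p : ℝ}

lemma ofReal_modulus_sub (hvi : ∀ a b, IntervalIntegrable (fun x => (1 + |v x|) ^ p) volume a b)
    {a b : ℝ} (hab : a ≤ b) : ENNReal.ofReal (modulus p v b - modulus p v a)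
      = ∫⁻ x in Ioc a b, ENNReal.ofReal ((1 + |v x|) ^ p) := by
  have h : modulus p v b - modulus p v a = ∫ y in a..b, (1 + |v y|) ^ p :=
    intervalIntegral.integral_interval_sub_left (hvi _ _) (hvi _ _)
  rw [h, intervalIntegral.integral_of_le hab]
  exact ofReal_integral_eq_lintegral_ofReal
    ((intervalIntegrable_iff_integrableOn_Ioc_of_le hab).1 (hvi _ _))
    (ae_of_all _ fun ξ => by positivity)

lemma modulus_mono (hvi : ∀ a b, IntervalIntegrable (fun x => (1 + |v x|) ^ p) volume a b) :
    Monotone (modulus p v) := fun a b hab => by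
  have h : modulus p v b - modulus p v a = ∫ y in a..b, (1 + |v y|) ^ p :=
    intervalIntegral.integral_interval_sub_left (hvi _ _) (hvi _ _)
  have : 0 ≤ ∫ y in a..b, (1 + |v y|) ^ p :=
    intervalIntegral.integral_nonneg hab fun x _ => by positivity
  linarith

lemma cellHalf_pos (hn : ∀ k, 0 < n k) (k : ℕ) : 0 < cellHalf n k := by
  have : (0:ℝ) < n k := by exact_mod_cast hn k
  rw [cellHalf]; positivity

lemma cellHalf_le (hn : ∀ k, 0 < n k) (k : ℕ) : cellHalf n k ≤ 1 := by
  have : (1:ℝ) ≤ n k := by exact_mod_cast hn k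
  rw [cellHalf, div_le_one (by positivity)]; linarith

/-- The label modulus varies little across half a cell, provided the primitive of `(1+|v|)^p`
oscillates little at the scale of a cell. -/
lemma modulus_shift (hn : ∀ k, 0 < n k) (hv : Measurable v)
    (hv0 : ∀ x ≤ 0, v x = 0)
    (hvi : ∀ a b, IntervalIntegrable (fun x => (1 + |v x|) ^ p) volume a b) {k : ℕ} {e : ℝ}
    (he : ∀ x ∈ Icc (-1:ℝ) (k + 1), ∀ y ∈ Icc (-1:ℝ) (k + 1), |x - y| ≤ 1 / n k →
      |modulus p v x - modulus p v y| ≤ e)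
    {ξ : ℝ} (h1 : ξ ∈ Ico (k:ℝ) (k + 1)) (h2 : ξ ∈ matSet n) :
    |modulus p (matW n v) ξ - modulus p (matW n v) (ξ + cellHalf n k)| ≤ 2 * e := by
  have hδ := cellHalf_pos hn k
  have hδ1 := cellHalf_le hn k
  set δ := cellHalf n k with hδd
  have hwi := matW_int hn hv hv0 hvi
  have hsh := (shift_mem (hn k) ξ).2 ⟨h1, h2⟩
  have hk0 : (0:ℝ) ≤ k := Nat.cast_nonneg k
  have hXa : -1 ≤ matX n (ξ - δ) := by
    have := matX_sub_nonneg (n := n) (show (-1:ℝ) ≤ ξ - δ by linarith [h1.1])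
    rwa [matX_neg (by norm_num)] at this
  have hXab : matX n (ξ - δ) ≤ matX n ξ := matX_sub_nonneg (by linarith)
  have hXbc : matX n ξ ≤ matX n (ξ + δ) := matX_sub_nonneg (by linarith)
  have hXc : matX n (ξ + δ) ≤ k + 1 := by
    have := matX_sub_le (n := n) (show (0:ℝ) ≤ ξ + δ by linarith [h1.1])
    rw [matX_zero] at this
    linarith [hsh.1.2]
  have hlen : |matX n (ξ + δ) - matX n (ξ - δ)| ≤ 1 / n k := by
    have := matX_sub_le (n := n) (show ξ - δ ≤ ξ + δ by linarith)
    rw [abs_of_nonneg (by linarith)]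
    refine this.trans (le_of_eq ?_)
    have hn' : (n k : ℝ) ≠ 0 := by exact_mod_cast (hn k).ne'
    rw [hδd, cellHalf]; field_simp; ring
  have hosc := he _ ⟨by linarith, hXc⟩ _ ⟨hXa, by linarith⟩ hlen
  have hm1 := modulus_mono hvi hXab
  have hm2 := modulus_mono hvi hXbc
  have hm3 := modulus_mono hwi (show ξ ≤ ξ + δ by linarith)
  have hG : Measurable (fun y : ℝ => ENNReal.ofReal ((1 + |y|) ^ p)) := by fun_prop
  have h3 := lintegral_matW_block hn hv hG k ξ (ξ + δ)
  rw [inter_eq_left.2 (show Ioc ξ (ξ + δ) ⊆ Ico (k:ℝ) (k + 1) from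
      fun y hy => ⟨by linarith [hy.1, h1.1], by linarith [hy.2, hsh.1.2]⟩),
    ← ofReal_modulus_sub hwi (by linarith), ← ofReal_modulus_sub hvi hXbc, ← hδd,
    add_sub_cancel_right, ← ofReal_modulus_sub hvi hXab,
    ← ENNReal.ofReal_add (by linarith) (by linarith),
    ENNReal.ofReal_le_ofReal_iff (by linarith)] at h3
  rw [abs_of_nonneg (by linarith)] at hosc
  rw [abs_sub_comm, abs_of_nonneg (by linarith)]
  have := abs_nonneg (modulus p v 0 - modulus p v 0)
  linarith

/-- **Non-collapse.** However the material labels of a block are compressed, the interleaved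
rarefaction labels expand, so the block keeps a definite length: a material label and its copy see
almost the same `A`, hence their strains differ by almost `1`. -/
lemma mat_coercive (hp : 1 ≤ p) (hn : ∀ k, 0 < n k) (hv : Measurable v)
    (hv0 : ∀ x ≤ 0, v x = 0)
    (hvi : ∀ a b, IntervalIntegrable (fun x => (1 + |v x|) ^ p) volume a b) {k : ℕ}
    {e C lam : ℝ} (hlam : 0 ≤ lam) (hC : 0 ≤ C)
    (he : ∀ x ∈ Icc (-1:ℝ) (k + 1), ∀ y ∈ Icc (-1:ℝ) (k + 1), |x - y| ≤ 1 / n k →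
      |modulus p v x - modulus p v y| ≤ e)
    (hsmall : lam * (C * (2 * e)) * (modulus p v (k + 1) - modulus p v (-1)) ≤ 1 / 4)
    {A : ℝ → ℝ} (hA : ∀ ξ η, |A ξ - A η| ≤
      C * |modulus p (matW n v) ξ - modulus p (matW n v) η|)
    (hAm : Measurable A)
    (h_int : IntervalIntegrable (fun ξ => |matS n ξ + lam * matW n v ξ * A ξ| ^ p) volume k (k + 1)) :
    (8:ℝ) ^ (-p) ≤ ∫ ξ in (k:ℝ)..(k + 1), |matS n ξ + lam * matW n v ξ * A ξ| ^ p := by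
  set S : ℝ → ℝ := fun ξ => matS n ξ + lam * matW n v ξ * A ξ with hS
  have hSm : Measurable S := by
    have := measurable_matS (n := n)
    have := measurable_matW (n := n) hv
    fun_prop
  have hm := measurableSet_matSet n
  have hk0 : (0:ℝ) ≤ k := Nat.cast_nonneg k
  have he0 : 0 ≤ e := by
    have := he 0 ⟨by norm_num, by linarith⟩ 0 ⟨by norm_num, by linarith⟩ (by simp)
    simpa using this
  set c : ℝ := lam * (C * (2 * e)) with hc
  have hc0 : 0 ≤ c := by positivity
  set E := Ico (k:ℝ) (k + 1) ∩ matSet n with hE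
  set E' := Ico (k:ℝ) (k + 1) \ matSet n with hE'
  have hEm : MeasurableSet E := measurableSet_Ico.inter hm
  have hE'm : MeasurableSet E' := measurableSet_Ico.diff hm
  have hpt : ∀ ξ ∈ E, (1:ENNReal) ≤ ENNReal.ofReal |S ξ| + ENNReal.ofReal |S (ξ + cellHalf n k)|
      + ENNReal.ofReal c * ENNReal.ofReal |v (matX n ξ)| := by
    intro ξ hξ
    rw [← ENNReal.ofReal_mul hc0, ← ENNReal.ofReal_add (abs_nonneg _) (abs_nonneg _),
      ← ENNReal.ofReal_add (by positivity) (by positivity), ← ENNReal.ofReal_one]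
    refine ENNReal.ofReal_le_ofReal ?_
    have hsh := (shift_mem (hn k) ξ).2 hξ
    have e1 : S ξ = 1 + lam * v (matX n ξ) * A ξ := by
      simp [hS, matS, hξ.2, matW_of_mem hξ.2]
    have e2 : S (ξ + cellHalf n k) = lam * v (matX n ξ) * A (ξ + cellHalf n k) := by
      simp [hS, matS, hsh.2, matW_shift (hn k) hξ.1 hξ.2]
    have h1 : |A ξ - A (ξ + cellHalf n k)| ≤ C * (2 * e) :=
      (hA _ _).trans (by gcongr; exact modulus_shift hn hv hv0 hvi he hξ.1 hξ.2)
    have h2 : (1:ℝ) = S ξ - S (ξ + cellHalf n k)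
        - lam * v (matX n ξ) * (A ξ - A (ξ + cellHalf n k)) := by rw [e1, e2]; ring
    have h3 : |lam * v (matX n ξ) * (A ξ - A (ξ + cellHalf n k))| ≤ c * |v (matX n ξ)| := by
      rw [abs_mul, abs_mul, abs_of_nonneg hlam, hc]
      calc lam * |v (matX n ξ)| * |A ξ - A (ξ + cellHalf n k)|
          ≤ lam * |v (matX n ξ)| * (C * (2 * e)) := by gcongr
        _ = _ := by ring
    have := le_abs_self (S ξ)
    have := neg_abs_le (S (ξ + cellHalf n k))
    have := neg_abs_le (lam * v (matX n ξ) * (A ξ - A (ξ + cellHalf n k)))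
    linarith
  have h1 : ENNReal.ofReal (1 / 2) ≤ (∫⁻ ξ in E, ENNReal.ofReal |S ξ|)
      + (∫⁻ ξ in E, ENNReal.ofReal |S (ξ + cellHalf n k)|)
      + ∫⁻ ξ in E, ENNReal.ofReal c * ENNReal.ofReal |v (matX n ξ)| := by
    rw [← volume_mat_block (hn k), ← hE, ← lintegral_add_left (by fun_prop),
      ← lintegral_add_left (by fun_prop)]
    calc volume E = ∫⁻ ξ in E, 1 := by simp
      _ ≤ _ := setLIntegral_mono' hEm hpt
  have h2 : ∫⁻ ξ in E, ENNReal.ofReal |S (ξ + cellHalf n k)| = ∫⁻ ξ in E', ENNReal.ofReal |S ξ| := by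
    rw [← lintegral_indicator hEm, ← lintegral_indicator hE'm,
      ← lintegral_add_right_eq_self (E'.indicator _) (cellHalf n k)]
    refine lintegral_congr fun ξ => ?_
    by_cases h : ξ ∈ E
    · rw [indicator_of_mem h, indicator_of_mem (show ξ + cellHalf n k ∈ E' from
        (shift_mem (hn k) ξ).2 h)]
    · rw [indicator_of_notMem h, indicator_of_notMem (show ξ + cellHalf n k ∉ E' from
        fun h' => h ((shift_mem (hn k) ξ).1 h'))]
  have h3 : (∫⁻ ξ in E, ENNReal.ofReal |S ξ|) + (∫⁻ ξ in E', ENNReal.ofReal |S ξ|)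
      = ∫⁻ ξ in Ico (k:ℝ) (k + 1), ENNReal.ofReal |S ξ| :=
    lintegral_inter_add_sdiff _ _ hm
  have hmod := modulus_mono hvi (show (-1:ℝ) ≤ k + 1 by linarith)
  have h4 : ∫⁻ ξ in E, ENNReal.ofReal c * ENNReal.ofReal |v (matX n ξ)| ≤ ENNReal.ofReal (1 / 4) := by
    rw [lintegral_const_mul' _ _ ENNReal.ofReal_ne_top]
    have h5 : ∫⁻ ξ in E, ENNReal.ofReal |v (matX n ξ)|
        ≤ ENNReal.ofReal (modulus p v (k + 1) - modulus p v (-1)) := by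
      rw [ofReal_modulus_sub hvi (by linarith)]
      calc ∫⁻ ξ in E, ENNReal.ofReal |v (matX n ξ)|
          ≤ ∫⁻ ξ in Ioc ((k:ℝ) - 1) (k + 1) ∩ matSet n, ENNReal.ofReal |v (matX n ξ)| :=
            lintegral_mono_set fun ξ hξ => ⟨⟨by linarith [hξ.1.1], hξ.1.2.le⟩, hξ.2⟩
        _ = ∫⁻ x in Ioc (matX n ((k:ℝ) - 1)) (matX n (k + 1)), ENNReal.ofReal |v x| :=
            lintegral_mat (G := fun y => ENNReal.ofReal |y|) hn hv (by fun_prop) _ _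
        _ ≤ ∫⁻ x in Ioc (-1:ℝ) (k + 1), ENNReal.ofReal |v x| := by
            refine lintegral_mono_set (Ioc_subset_Ioc ?_ ?_)
            · have := matX_sub_nonneg (n := n) (show (-1:ℝ) ≤ k - 1 by linarith)
              rwa [matX_neg (by norm_num)] at this
            · have := matX_sub_le (n := n) (show (0:ℝ) ≤ (k:ℝ) + 1 by linarith)
              rw [matX_zero] at this
              linarith
        _ ≤ _ := lintegral_mono fun x => ENNReal.ofReal_le_ofReal (by
            calc |v x| ≤ (1 + |v x|) ^ (1:ℝ) := by rw [Real.rpow_one]; linarith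
              _ ≤ _ := Real.rpow_le_rpow_of_exponent_le (by linarith [abs_nonneg (v x)]) hp)
    refine (mul_le_mul_right h5 _).trans ?_
    rw [← ENNReal.ofReal_mul hc0]
    exact ENNReal.ofReal_le_ofReal hsmall
  -- Young's inequality in the form `|s| ≤ 1/8 + 8^(p-1) |s|^p`
  have hyoung : ∀ s : ℝ, |s| ≤ 1 / 8 + 8 ^ (p - 1) * |s| ^ p := by
    intro s
    rcases le_or_gt |s| (1 / 8) with h | h
    · have : 0 ≤ (8:ℝ) ^ (p - 1) * |s| ^ p := by positivity
      linarith
    · have h6 : (8 * |s|) ^ (1:ℝ) ≤ (8 * |s|) ^ p :=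
        Real.rpow_le_rpow_of_exponent_le (by linarith) hp
      rw [Real.rpow_one, Real.mul_rpow (by norm_num) (abs_nonneg _)] at h6
      have h7 : (8:ℝ) ^ p = 8 ^ (p - 1) * 8 := by
        rw [← Real.rpow_add_one (by norm_num)]; ring_nf
      rw [h7] at h6
      linarith
  set I := ∫ ξ in (k:ℝ)..(k + 1), |S ξ| ^ p with hI
  have hI0 : 0 ≤ I := intervalIntegral.integral_nonneg (by linarith) fun x _ => by positivity
  have hIl : ∫⁻ ξ in Ico (k:ℝ) (k + 1), ENNReal.ofReal (|S ξ| ^ p) = ENNReal.ofReal I := by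
    rw [hI, intervalIntegral.integral_of_le (by linarith), ofReal_integral_eq_lintegral_ofReal
      ((intervalIntegrable_iff_integrableOn_Ioc_of_le (by linarith)).1 h_int)
      (ae_of_all _ fun ξ => by positivity)]
    exact setLIntegral_congr Ico_ae_eq_Ioc
  have h8 : ∫⁻ ξ in Ico (k:ℝ) (k + 1), ENNReal.ofReal |S ξ|
      ≤ ENNReal.ofReal (1 / 8) + ENNReal.ofReal (8 ^ (p - 1)) * ENNReal.ofReal I := by
    calc ∫⁻ ξ in Ico (k:ℝ) (k + 1), ENNReal.ofReal |S ξ|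
        ≤ ∫⁻ ξ in Ico (k:ℝ) (k + 1), (ENNReal.ofReal (1 / 8)
            + ENNReal.ofReal (8 ^ (p - 1)) * ENNReal.ofReal (|S ξ| ^ p)) := by
          refine lintegral_mono fun ξ => ?_
          rw [← ENNReal.ofReal_mul (by positivity), ← ENNReal.ofReal_add (by norm_num) (by positivity)]
          exact ENNReal.ofReal_le_ofReal (hyoung _)
      _ = _ := by
          rw [lintegral_add_left measurable_const, lintegral_const_mul' _ _ ENNReal.ofReal_ne_top, hIl]
          simp
  rw [h2, h3] at h1
  have h9 := h1.trans (add_le_add h8 h4)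
  rw [← ENNReal.ofReal_mul (by positivity), ← ENNReal.ofReal_add (by norm_num) (by positivity),
    ← ENNReal.ofReal_add (by positivity) (by norm_num),
    ENNReal.ofReal_le_ofReal_iff (by positivity)] at h9
  have h10 : (8:ℝ) ^ (p - 1) * 8 ^ (-p) = 1 / 8 := by
    rw [← Real.rpow_add (by norm_num)]
    rw [show p - 1 + -p = -1 by ring, Real.rpow_neg_one]
    norm_num
  have h11 : (0:ℝ) < 8 ^ (p - 1) := by positivity
  by_contra hlt
  have := mul_lt_mul_of_pos_left (not_le.1 hlt) h11
  linarith

/-- A choice of cell numbers for which `mat_coercive` applies with constants `C k`. -/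
lemma exists_cells {C : ℕ → ℝ} {lam : ℝ} (hlam : 0 ≤ lam) (hC : ∀ k, 0 ≤ C k)
    (hvi : ∀ a b, IntervalIntegrable (fun x => (1 + |v x|) ^ p) volume a b) :
    ∃ (n : ℕ → ℕ) (e : ℕ → ℝ), (∀ k, 0 < n k) ∧
      (∀ k : ℕ, ∀ x ∈ Icc (-1:ℝ) (k + 1), ∀ y ∈ Icc (-1:ℝ) (k + 1), |x - y| ≤ 1 / n k →
        |modulus p v x - modulus p v y| ≤ e k) ∧
      ∀ k : ℕ, lam * (C k * (2 * e k)) * (modulus p v (k + 1) - modulus p v (-1)) ≤ 1 / 4 := by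
  have hcont : Continuous (modulus p v) := intervalIntegral.continuous_primitive hvi 0
  have key : ∀ k : ℕ, ∃ (m : ℕ) (e : ℝ), 0 < m ∧
      (∀ x ∈ Icc (-1:ℝ) (k + 1), ∀ y ∈ Icc (-1:ℝ) (k + 1), |x - y| ≤ 1 / m →
        |modulus p v x - modulus p v y| ≤ e) ∧
      lam * (C k * (2 * e)) * (modulus p v (k + 1) - modulus p v (-1)) ≤ 1 / 4 := by
    intro k
    have hk0 : (0:ℝ) ≤ k := Nat.cast_nonneg k
    have hmod := modulus_mono hvi (show (-1:ℝ) ≤ k + 1 by linarith)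
    set D := modulus p v (k + 1) - modulus p v (-1) with hD
    have hD0 : 0 ≤ D := by linarith
    have hB : 0 ≤ lam * C k * D := mul_nonneg (mul_nonneg hlam (hC k)) hD0
    set e := 1 / (8 * (lam * C k * D + 1)) with he
    have he0 : 0 < e := by positivity
    have huc := (isCompact_Icc (a := (-1:ℝ)) (b := k + 1)).uniformContinuousOn_of_continuous
      hcont.continuousOn
    obtain ⟨d, hd, h⟩ := Metric.uniformContinuousOn_iff.1 huc e he0
    obtain ⟨m, hm⟩ := exists_nat_one_div_lt hd
    refine ⟨m + 1, e, Nat.succ_pos m, fun x hx y hy hxy => ?_, ?_⟩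
    · push_cast at hxy
      exact (h x hx y hy (hxy.trans_lt hm)).le
    · have : lam * (C k * (2 * e)) * D = (lam * C k * D) / (4 * (lam * C k * D + 1)) := by
        rw [he]; field_simp; ring
      rw [this, div_le_div_iff₀ (by positivity) (by norm_num)]
      linarith
  choose n e h using key
  exact ⟨n, e, fun k => (h k).1, fun k => (h k).2.1, fun k => (h k).2.2⟩

end

/-! ### Characteristics -/

/-- The characteristic through the label `ξ`: `X(ξ,t) = F(0) t + ∫₀^ξ |S|^p dη`, with `F = f'`. -/
noncomputable def lagX (p lam : ℝ) (F s₀ w : ℝ → ℝ) (A : ℝ → ℝ → ℝ) (ξ t : ℝ) : ℝ :=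
  F 0 * t + ∫ η in (0:ℝ)..ξ, |strain lam s₀ w A η t| ^ p

/-- A global solution of the Lagrangian system whose characteristics exhaust the line at every
time, and in which the labels `ξ < 0` carry the zero solution. -/
structure LagSol (p lam M L : ℝ) (F g s₀ w : ℝ → ℝ) (A : ℝ → ℝ → ℝ) : Prop
    extends LagData p lam M L g s₀ w where
  adm : Adm M A
  fix : ∀ ξ t, A ξ t = ∫ τ in (0:ℝ)..t, g (lagU p lam s₀ w A ξ τ)
  F_deriv : ∀ a, HasDerivAt F (g a) a
  s_neg : ∀ ξ < 0, s₀ ξ = 1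
  w_neg : ∀ ξ < 0, w ξ = 0
  X_top : ∀ t, Tendsto (fun ξ => lagX p lam F s₀ w A ξ t) atTop atTop

namespace LagSol
variable {p lam M L : ℝ} {F g s₀ w : ℝ → ℝ} {A : ℝ → ℝ → ℝ}

lemma X_sub (h : LagSol p lam M L F g s₀ w A) (t a b : ℝ) :
    lagX p lam F s₀ w A b t - lagX p lam F s₀ w A a t = ∫ ξ in a..b, |strain lam s₀ w A ξ t| ^ p := by
  have := intervalIntegral.integral_interval_sub_left (h.strainPow_int h.adm t 0 b)
    (h.strainPow_int h.adm t 0 a)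
  unfold lagX
  linarith

lemma X_mono (h : LagSol p lam M L F g s₀ w A) (t : ℝ) :
    Monotone fun ξ => lagX p lam F s₀ w A ξ t := fun a b hab => by
  have h1 := h.X_sub t a b
  have h2 : 0 ≤ ∫ ξ in a..b, |strain lam s₀ w A ξ t| ^ p :=
    intervalIntegral.integral_nonneg hab fun x _ => by positivity
  show lagX p lam F s₀ w A a t ≤ lagX p lam F s₀ w A b t
  linarith

lemma hasDerivAt_strain (h : LagSol p lam M L F g s₀ w A) (ξ t : ℝ) :
    HasDerivAt (fun t => strain lam s₀ w A ξ t) (lam * w ξ * g (lagU p lam s₀ w A ξ t)) t := by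
  have hc := h.gU_cont h.adm ξ
  have h1 : HasDerivAt (fun t => A ξ t) (g (lagU p lam s₀ w A ξ t)) t := by
    have := intervalIntegral.integral_hasDerivAt_right (hc.intervalIntegrable 0 t)
      hc.stronglyMeasurable.stronglyMeasurableAtFilter hc.continuousAt
    refine this.congr_of_eventuallyEq (Eventually.of_forall fun t => h.fix ξ t)
  exact (h1.const_mul (lam * w ξ)).const_add (s₀ ξ)

lemma hasDerivAt_strainPow (h : LagSol p lam M L F g s₀ w A) (ξ t : ℝ) :
    HasDerivAt (fun t => |strain lam s₀ w A ξ t| ^ p)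
      (g (lagU p lam s₀ w A ξ t) * (w ξ * oddPow p (strain lam s₀ w A ξ t))) t := by
  have h1 := (hasDerivAt_abs_rpow (strain lam s₀ w A ξ t) (p := p)
    (by linarith [h.hp])).comp t (h.hasDerivAt_strain ξ t)
  refine h1.congr_deriv ?_
  rw [oddPow]
  linear_combination (|strain lam s₀ w A ξ t| ^ (p - 2) * strain lam s₀ w A ξ t * w ξ *
    g (lagU p lam s₀ w A ξ t)) * h.lam_mul

lemma hasDerivAt_flux (h : LagSol p lam M L F g s₀ w A) (ξ t : ℝ) :
    HasDerivAt (fun t => w ξ * oddPow p (strain lam s₀ w A ξ t))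
      ((1 - lam) * g (lagU p lam s₀ w A ξ t) * (w ξ ^ 2 * |strain lam s₀ w A ξ t| ^ (p - 2))) t := by
  have h1 := ((hasDerivAt_oddPow h.hp (strain lam s₀ w A ξ t)).comp t
    (h.hasDerivAt_strain ξ t)).const_mul (w ξ)
  refine h1.congr_deriv ?_
  linear_combination (|strain lam s₀ w A ξ t| ^ (p - 2) * w ξ ^ 2 *
    g (lagU p lam s₀ w A ξ t)) * h.lam_mul

/-- Labels move with the characteristic speed, `X_t = f'(U)`. -/
lemma hasDerivAt_X (h : LagSol p lam M L F g s₀ w A) (ξ t : ℝ) :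
    HasDerivAt (fun t => lagX p lam F s₀ w A ξ t) (F (lagU p lam s₀ w A ξ t)) t := by
  have hp := h.hp
  have hlam := h.hlam
  have hM := h.M_nonneg
  have h1 := (intervalIntegral.hasDerivAt_integral_of_dominated_loc_of_deriv_le
    (F := fun t η => |strain lam s₀ w A η t| ^ p)
    (F' := fun t η => g (lagU p lam s₀ w A η t) * (w η * oddPow p (strain lam s₀ w A η t)))
    (x₀ := t) (s := Metric.ball t 1) (a := 0) (b := ξ) (μ := volume)
    (bound := fun η => M * ((1 + lam * M * (|t| + 1)) ^ (p - 1) * (1 + |w η|) ^ p))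
    (Metric.ball_mem_nhds t one_pos)
    (Eventually.of_forall fun t => (h.strainPow_meas h.adm t).aestronglyMeasurable)
    (h.strainPow_int h.adm t 0 ξ) ?_ ?_ (((h.K_int 0 ξ).const_mul _).const_mul _) ?_).2
  · have h2 : ∫ η in (0:ℝ)..ξ, g (lagU p lam s₀ w A η t) * (w η * oddPow p (strain lam s₀ w A η t))
        = F (lagU p lam s₀ w A ξ t) - F 0 :=
      integral_comp_primitive h.F_deriv h.g_bd (fun a b => h.flux_int h.adm t a b) ξ
    rw [h2] at h1
    have h3 := ((hasDerivAt_id t).const_mul (F 0)).add h1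
    refine h3.congr_deriv ?_
    ring
  · have h4 : Measurable (fun η => lagU p lam s₀ w A η t) :=
      ((h.lagU_cont h.adm).comp (by fun_prop : Continuous fun η : ℝ => (η, t))).measurable
    exact ((h.g_cont.measurable.comp h4).mul (h.flux_meas h.adm t)).aestronglyMeasurable
  · refine ae_of_all _ fun η _ τ hτ => ?_
    have hτ' : |τ| ≤ |t| + 1 := by
      have h5 : |τ - t| < 1 := by simpa [Real.dist_eq] using hτ
      have := abs_sub_abs_le_abs_sub τ t
      linarith
    rw [norm_mul]
    refine mul_le_mul (h.g_bd _) ((h.flux_le h.adm η τ).trans ?_) (norm_nonneg _) hM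
    have := h.ct_pos τ
    gcongr
    linarith
  · exact ae_of_all _ fun η _ τ _ => h.hasDerivAt_strainPow η τ

lemma X_cont (h : LagSol p lam M L F g s₀ w A) :
    Continuous (Function.uncurry (lagX p lam F s₀ w A)) := by
  have hp := h.hp
  refine continuous_uncurry_of_modulus (C := fun t => (1 + lam * M * |t|) ^ p)
    (G := modulus p w) ?_ h.modulus_cont (fun ξ => ?_) (fun ξ η t => ?_)
  · exact Continuous.rpow_const (by fun_prop) fun t => Or.inr (by linarith)
  · exact continuous_iff_continuousAt.2 fun t => (h.hasDerivAt_X ξ t).continuousAt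
  · rw [h.X_sub]
    have := h.ct_pos t
    refine abs_integral_le_modulus h.toLagData (by positivity) (fun y => ?_) ξ η
    rw [abs_of_nonneg (by positivity)]
    exact h.strainPow_le h.adm y t

lemma X_cont_label (h : LagSol p lam M L F g s₀ w A) (t : ℝ) :
    Continuous (fun ξ => lagX p lam F s₀ w A ξ t) :=
  h.X_cont.comp (by fun_prop : Continuous fun ξ : ℝ => (ξ, t))

lemma U_neg (h : LagSol p lam M L F g s₀ w A) {ξ : ℝ} (hξ : ξ ≤ 0) (t : ℝ) :
    lagU p lam s₀ w A ξ t = 0 := by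
  unfold lagU
  rw [intervalIntegral.integral_congr_ae (g := fun _ => (0:ℝ))]
  · simp
  · filter_upwards [Measure.ae_ne volume (0:ℝ)] with x hx hx'
    rw [uIoc_of_ge hξ] at hx'
    rw [h.w_neg x (lt_of_le_of_ne hx'.2 hx), zero_mul]

lemma X_neg (h : LagSol p lam M L F g s₀ w A) {ξ : ℝ} (hξ : ξ ≤ 0) (t : ℝ) :
    lagX p lam F s₀ w A ξ t = F 0 * t + ξ := by
  unfold lagX
  rw [intervalIntegral.integral_congr_ae (g := fun _ => (1:ℝ))]
  · simp
  · filter_upwards [Measure.ae_ne volume (0:ℝ)] with x hx hx'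
    rw [uIoc_of_ge hξ] at hx'
    have h0 := lt_of_le_of_ne hx'.2 hx
    simp [strain, h.w_neg x h0, h.s_neg x h0]

lemma X_surj (h : LagSol p lam M L F g s₀ w A) (t : ℝ) :
    Function.Surjective (fun ξ => lagX p lam F s₀ w A ξ t) := by
  refine (h.X_cont_label t).surjective (h.X_top t) ?_
  refine (tendsto_atBot_add_const_left _ (F 0 * t) tendsto_id).congr' ?_
  exact (eventually_le_atBot 0).mono fun ξ hξ => (h.X_neg hξ t).symm

/-- The Lagrangian solution is a function of the position. -/
lemma U_eq_of_X_eq (h : LagSol p lam M L F g s₀ w A) {a b t : ℝ}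
    (hX : lagX p lam F s₀ w A a t = lagX p lam F s₀ w A b t) :
    lagU p lam s₀ w A a t = lagU p lam s₀ w A b t := by
  wlog hab : a ≤ b generalizing a b
  · exact (this hX.symm (not_le.1 hab).le).symm
  have hp := h.hp
  have h1 := h.X_sub t a b
  rw [hX, sub_self, intervalIntegral.integral_of_le hab] at h1
  have h2 := (setIntegral_eq_zero_iff_of_nonneg_ae
    (ae_of_all _ fun ξ => (by positivity : 0 ≤ |strain lam s₀ w A ξ t| ^ p))
    ((intervalIntegrable_iff_integrableOn_Ioc_of_le hab).1 (h.strainPow_int h.adm t a b))).1 h1.symm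
  have h3 : lagU p lam s₀ w A b t - lagU p lam s₀ w A a t
      = ∫ η in a..b, w η * oddPow p (strain lam s₀ w A η t) :=
    intervalIntegral.integral_interval_sub_left (h.flux_int h.adm t 0 b) (h.flux_int h.adm t 0 a)
  have h4 : ∫ η in a..b, w η * oddPow p (strain lam s₀ w A η t) = 0 := by
    rw [intervalIntegral.integral_of_le hab]
    refine integral_eq_zero_of_ae ?_
    filter_upwards [h2] with ξ hξ
    have h5 : |strain lam s₀ w A ξ t| ^ p = 0 := hξ
    have h6 : strain lam s₀ w A ξ t = 0 := by
      have := (Real.rpow_eq_zero (abs_nonneg _) (by linarith)).1 h5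
      simpa using this
    simp [h6, oddPow]
  linarith

end LagSol

/-! ### The solution in the original variables -/

/-- The last label located at or to the left of `x` at time `t`: a right inverse of `ξ ↦ X(ξ,t)`. -/
noncomputable def eulLabel (p lam : ℝ) (F s₀ w : ℝ → ℝ) (A : ℝ → ℝ → ℝ) (x t : ℝ) : ℝ :=
  sSup {ξ | lagX p lam F s₀ w A ξ t ≤ x}

/-- The solution in the original variables. -/
noncomputable def eulU (p lam : ℝ) (F s₀ w : ℝ → ℝ) (A : ℝ → ℝ → ℝ) (x t : ℝ) : ℝ :=
  lagU p lam s₀ w A (eulLabel p lam F s₀ w A x t) t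

/-- The slope `u_x = w / S` in the original variables. -/
noncomputable def eulSlope (p lam : ℝ) (F s₀ w : ℝ → ℝ) (A : ℝ → ℝ → ℝ) (x t : ℝ) : ℝ :=
  w (eulLabel p lam F s₀ w A x t) / strain lam s₀ w A (eulLabel p lam F s₀ w A x t) t

namespace LagSol
variable {p lam M L : ℝ} {F g s₀ w : ℝ → ℝ} {A : ℝ → ℝ → ℝ}

lemma bddAbove_labels (h : LagSol p lam M L F g s₀ w A) (x t : ℝ) :
    BddAbove {ξ | lagX p lam F s₀ w A ξ t ≤ x} := by
  obtain ⟨b, hb⟩ := ((h.X_top t).eventually_gt_atTop x).exists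
  refine ⟨b, fun ξ hξ => ?_⟩
  by_contra hlt
  have := h.X_mono t (not_le.1 hlt).le
  have hξ : lagX p lam F s₀ w A ξ t ≤ x := hξ
  simp only at this
  linarith

lemma X_label_le (h : LagSol p lam M L F g s₀ w A) (x t : ℝ) :
    lagX p lam F s₀ w A (eulLabel p lam F s₀ w A x t) t ≤ x := by
  have hcl : IsClosed {ξ | lagX p lam F s₀ w A ξ t ≤ x} :=
    isClosed_le (h.X_cont_label t) continuous_const
  obtain ⟨ξ, hξ⟩ := h.X_surj t x
  exact hcl.csSup_mem ⟨ξ, hξ.le⟩ (h.bddAbove_labels x t)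

lemma le_label_iff (h : LagSol p lam M L F g s₀ w A) {c x t : ℝ} :
    c ≤ eulLabel p lam F s₀ w A x t ↔ lagX p lam F s₀ w A c t ≤ x :=
  ⟨fun hc => (h.X_mono t hc).trans (h.X_label_le x t),
    fun hc => le_csSup (h.bddAbove_labels x t) hc⟩

lemma X_label (h : LagSol p lam M L F g s₀ w A) (x t : ℝ) :
    lagX p lam F s₀ w A (eulLabel p lam F s₀ w A x t) t = x := by
  refine le_antisymm (h.X_label_le x t) ?_
  obtain ⟨ξ, hξ⟩ := h.X_surj t x
  have h1 := h.X_mono t (h.le_label_iff.2 (le_of_eq hξ))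
  simp only at h1 hξ
  linarith

lemma measurable_label (h : LagSol p lam M L F g s₀ w A) :
    Measurable (fun q : ℝ × ℝ => eulLabel p lam F s₀ w A q.1 q.2) := by
  refine measurable_of_Ici fun c => ?_
  have : (fun q : ℝ × ℝ => eulLabel p lam F s₀ w A q.1 q.2) ⁻¹' Ici c
      = {q : ℝ × ℝ | lagX p lam F s₀ w A c q.2 ≤ q.1} := by
    ext q; exact h.le_label_iff
  rw [this]
  have hc : Continuous (fun q : ℝ × ℝ => lagX p lam F s₀ w A c q.2) :=
    h.X_cont.comp (by fun_prop : Continuous fun q : ℝ × ℝ => (c, q.2))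
  exact (isClosed_le hc continuous_fst).measurableSet

lemma measurable_slope (h : LagSol p lam M L F g s₀ w A) :
    Measurable (fun q : ℝ × ℝ => eulSlope p lam F s₀ w A q.1 q.2) := by
  have h1 := h.measurable_label
  exact (h.w_meas.comp h1).div ((h.strain_meas₂ h.adm).comp (h1.prodMk measurable_snd))

lemma eulU_X (h : LagSol p lam M L F g s₀ w A) (ξ t : ℝ) :
    eulU p lam F s₀ w A (lagX p lam F s₀ w A ξ t) t = lagU p lam s₀ w A ξ t :=
  h.U_eq_of_X_eq (h.X_label _ t)

/-- Labels of points converging to `(x, t)` stay bounded, and all their limit points sit at `x`;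
since `U` is constant on labels sharing a position, `u` is continuous. -/
lemma eulU_cont (h : LagSol p lam M L F g s₀ w A) :
    Continuous (fun q : ℝ × ℝ => eulU p lam F s₀ w A q.1 q.2) := by
  rw [continuous_iff_continuousAt]
  rintro ⟨x, t⟩
  obtain ⟨a, ha⟩ := h.X_surj t (x - 1)
  obtain ⟨b, hb⟩ := h.X_surj t (x + 1)
  have hXc : ∀ c, Continuous (fun q : ℝ × ℝ => lagX p lam F s₀ w A c q.2 - q.1) := fun c =>
    (h.X_cont.comp (by fun_prop : Continuous fun q : ℝ × ℝ => (c, q.2))).sub continuous_fst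
  have hmem : ∀ᶠ q : ℝ × ℝ in 𝓝 (x, t), eulLabel p lam F s₀ w A q.1 q.2 ∈ Icc a b := by
    have h1 : ∀ᶠ q : ℝ × ℝ in 𝓝 (x, t), lagX p lam F s₀ w A a q.2 - q.1 < 0 :=
      (hXc a).continuousAt.eventually_lt_const (by simp only at ha ⊢; linarith)
    have h2 : ∀ᶠ q : ℝ × ℝ in 𝓝 (x, t), 0 < lagX p lam F s₀ w A b q.2 - q.1 :=
      (hXc b).continuousAt.eventually_const_lt (by simp only at hb ⊢; linarith)
    filter_upwards [h1, h2] with q hq1 hq2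
    refine ⟨h.le_label_iff.2 (by linarith), ?_⟩
    by_contra hlt
    have := h.le_label_iff.1 (not_le.1 hlt).le
    linarith
  rw [ContinuousAt, tendsto_iff_ultrafilter]
  intro 𝒰 h𝒰
  obtain ⟨ξ, _, hξ⟩ := (isCompact_Icc (a := a) (b := b)).ultrafilter_le_nhds
    (𝒰.map fun q : ℝ × ℝ => eulLabel p lam F s₀ w A q.1 q.2) (by
      rw [le_principal_iff]; exact h𝒰 hmem)
  have hξ' : Tendsto (fun q : ℝ × ℝ => eulLabel p lam F s₀ w A q.1 q.2) 𝒰 (𝓝 ξ) := hξ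
  have ht : Tendsto (fun q : ℝ × ℝ => q.2) 𝒰 (𝓝 t) :=
    (continuous_snd.tendsto (x, t)).mono_left h𝒰
  have hx : Tendsto (fun q : ℝ × ℝ => q.1) 𝒰 (𝓝 x) :=
    (continuous_fst.tendsto (x, t)).mono_left h𝒰
  have h1 := (h.X_cont.tendsto (ξ, t)).comp (hξ'.prodMk_nhds ht)
  have h2 : Tendsto (fun q : ℝ × ℝ => q.1) 𝒰 (𝓝 (lagX p lam F s₀ w A ξ t)) :=
    h1.congr fun q => h.X_label q.1 q.2
  have h3 : lagX p lam F s₀ w A ξ t = x := tendsto_nhds_unique h2 hx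
  have h4 := ((h.lagU_cont h.adm).tendsto (ξ, t)).comp (hξ'.prodMk_nhds ht)
  have h5 : lagU p lam s₀ w A ξ t = eulU p lam F s₀ w A x t := by rw [← h.eulU_X, h3]
  show Tendsto _ _ (𝓝 (eulU p lam F s₀ w A x t))
  rw [← h5]
  exact h4

/-- Almost every label with nonzero strain is the last one at its position: exceptional positions
are the `X(r,t)` with `r` rational, which carry no length. -/
lemma ae_label_X (h : LagSol p lam M L F g s₀ w A) (t : ℝ) :
    ∀ᵐ ξ, strain lam s₀ w A ξ t ≠ 0 →
      eulLabel p lam F s₀ w A (lagX p lam F s₀ w A ξ t) t = ξ := by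
  have hp := h.hp
  have hmap := map_withDensity_primitive (X := fun ξ => lagX p lam F s₀ w A ξ t)
    (q := fun ξ => |strain lam s₀ w A ξ t| ^ p) (fun ξ => by positivity)
    (h.strainPow_int h.adm t) (fun a b => h.X_sub t a b) (h.X_cont_label t) (h.X_surj t)
  have hcount : (range fun r : ℚ => lagX p lam F s₀ w A r t).Countable := countable_range _
  have h1 := hcount.ae_notMem volume
  rw [← hmap] at h1
  have h2 := ae_of_ae_map (h.X_cont_label t).aemeasurable h1
  rw [ae_withDensity_iff (h.strainPow_meas h.adm t).ennreal_ofReal] at h2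
  filter_upwards [h2] with ξ hξ hS
  have h3 := hξ (by
    have : 0 < |strain lam s₀ w A ξ t| := abs_pos.2 hS
    have : 0 < |strain lam s₀ w A ξ t| ^ p := by positivity
    simpa using this)
  refine le_antisymm ?_ (h.le_label_iff.2 le_rfl)
  by_contra hlt
  obtain ⟨r, hr1, hr2⟩ := exists_rat_btwn (not_le.1 hlt)
  exact h3 ⟨r, le_antisymm (h.le_label_iff.1 hr2.le) (h.X_mono t hr1.le)⟩

lemma lintegral_slope_lt_top (h : LagSol p lam M L F g s₀ w A) (t c d : ℝ) :
    ∫⁻ x in Ioc c d, ENNReal.ofReal (|eulSlope p lam F s₀ w A x t| ^ p) < ⊤ := by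
  have hp := h.hp
  obtain ⟨a, ha⟩ := h.X_surj t c
  obtain ⟨b, hb⟩ := h.X_surj t d
  simp only at ha hb
  have hm : Measurable fun x => eulSlope p lam F s₀ w A x t :=
    h.measurable_slope.comp (by fun_prop : Measurable fun x : ℝ => (x, t))
  have h1 := lintegral_comp_primitive (X := fun ξ => lagX p lam F s₀ w A ξ t)
    (q := fun ξ => |strain lam s₀ w A ξ t| ^ p) (fun ξ => by positivity)
    (h.strainPow_meas h.adm t) (h.strainPow_int h.adm t) (fun a b => h.X_sub t a b)
    (h.X_cont_label t) (h.X_surj t)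
    (G := fun x => ENNReal.ofReal (|eulSlope p lam F s₀ w A x t| ^ p)) (by fun_prop) a b
  simp only [ha, hb] at h1
  rw [← h1]
  have h2 : ∫⁻ ξ in Ioc a b, ENNReal.ofReal ((1 + |w ξ|) ^ p) < ⊤ := by
    rcases le_or_gt b a with hab | hab
    · simp [Ioc_eq_empty_of_le hab]
    · exact ((intervalIntegrable_iff_integrableOn_Ioc_of_le hab.le).1 (h.K_int a b)).lintegral_lt_top
  refine lt_of_le_of_lt (lintegral_mono_ae ?_) h2
  filter_upwards [ae_restrict_of_ae (h.ae_label_X t)] with ξ hξ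
  rw [← ENNReal.ofReal_mul (by positivity)]
  refine ENNReal.ofReal_le_ofReal ?_
  rcases eq_or_ne (strain lam s₀ w A ξ t) 0 with h0 | h0
  · rw [h0, abs_zero, Real.zero_rpow (by linarith), zero_mul]; positivity
  · rw [eulSlope, hξ h0, ← Real.mul_rpow (abs_nonneg _) (abs_nonneg _), ← abs_mul,
      mul_div_cancel₀ _ h0]
    gcongr
    linarith

lemma slopePow_int (h : LagSol p lam M L F g s₀ w A) (t a b : ℝ) :
    IntegrableOn (fun x => |eulSlope p lam F s₀ w A x t| ^ p) (Ioc a b) := by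
  have hm : Measurable fun x => eulSlope p lam F s₀ w A x t :=
    h.measurable_slope.comp (by fun_prop : Measurable fun x : ℝ => (x, t))
  refine ⟨(by fun_prop : Measurable _).aestronglyMeasurable, ?_⟩
  rw [hasFiniteIntegral_iff_ofReal (ae_of_all _ fun ξ => by positivity)]
  exact h.lintegral_slope_lt_top t a b

lemma slope_int (h : LagSol p lam M L F g s₀ w A) (t a b : ℝ) :
    IntegrableOn (fun x => eulSlope p lam F s₀ w A x t) (Ioc a b) := by
  have hm : Measurable fun x => eulSlope p lam F s₀ w A x t :=
    h.measurable_slope.comp (by fun_prop : Measurable fun x : ℝ => (x, t))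
  refine ((integrableOn_const (C := (1:ℝ)) (by simp) (by simp)).add (h.slopePow_int t a b)).mono'
    hm.aestronglyMeasurable (ae_of_all _ fun x => ?_)
  show |eulSlope p lam F s₀ w A x t| ≤ 1 + |eulSlope p lam F s₀ w A x t| ^ p
  have hp := h.hp
  rcases le_or_gt |eulSlope p lam F s₀ w A x t| 1 with h1 | h1
  · have : 0 ≤ |eulSlope p lam F s₀ w A x t| ^ p := by positivity
    linarith
  · have := Real.rpow_le_rpow_of_exponent_le h1.le (show 1 ≤ p by linarith)
    rw [Real.rpow_one] at this
    linarith

/-- `eulSlope` is the distributional `x`-derivative of `eulU`. -/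
lemma eulU_sub (h : LagSol p lam M L F g s₀ w A) (t : ℝ) {x y : ℝ} (hxy : x ≤ y) :
    eulU p lam F s₀ w A y t - eulU p lam F s₀ w A x t
      = ∫ z in x..y, eulSlope p lam F s₀ w A z t := by
  have hp := h.hp
  have hm : Measurable fun x => eulSlope p lam F s₀ w A x t :=
    h.measurable_slope.comp (by fun_prop : Measurable fun x : ℝ => (x, t))
  set a := eulLabel p lam F s₀ w A x t with ha
  set b := eulLabel p lam F s₀ w A y t with hb
  have hXa : lagX p lam F s₀ w A a t = x := h.X_label x t
  have hXb : lagX p lam F s₀ w A b t = y := h.X_label y t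
  have hab : a ≤ b := h.le_label_iff.2 (by rw [hXa]; exact hxy)
  have h1 := setIntegral_comp_primitive (X := fun ξ => lagX p lam F s₀ w A ξ t)
    (q := fun ξ => |strain lam s₀ w A ξ t| ^ p) (fun ξ => by positivity)
    (h.strainPow_meas h.adm t) (h.strainPow_int h.adm t) (fun a b => h.X_sub t a b)
    (h.X_cont_label t) (h.X_surj t)
    (G := fun x => eulSlope p lam F s₀ w A x t) hm a b
  simp only [hXa, hXb] at h1
  rw [intervalIntegral.integral_of_le hxy, ← h1]
  have h3 : lagU p lam s₀ w A b t - lagU p lam s₀ w A a t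
      = ∫ η in a..b, w η * oddPow p (strain lam s₀ w A η t) :=
    intervalIntegral.integral_interval_sub_left (h.flux_int h.adm t 0 b) (h.flux_int h.adm t 0 a)
  show lagU p lam s₀ w A b t - lagU p lam s₀ w A a t = _
  rw [h3, intervalIntegral.integral_of_le hab]
  refine integral_congr_ae ?_
  filter_upwards [ae_restrict_of_ae (h.ae_label_X t)] with ξ hξ
  rcases eq_or_ne (strain lam s₀ w A ξ t) 0 with h0 | h0
  · simp [h0, oddPow, Real.zero_rpow (show p ≠ 0 by linarith)]
  · rw [eulSlope, hξ h0, absPow_mul_div]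

lemma eulU_zero (h : LagSol p lam M L F g s₀ w A) (hF : 0 ≤ F 0) {t : ℝ} (ht : 0 ≤ t) :
    eulU p lam F s₀ w A 0 t = 0 := by
  have h0 : -(F 0 * t) ≤ 0 := by
    have : 0 ≤ F 0 * t := by positivity
    linarith
  have h1 := h.eulU_X (-(F 0 * t)) t
  rw [h.X_neg h0, h.U_neg h0] at h1
  simpa using h1

/-- Hölder's inequality applied to the slope. -/
lemma eulU_holder (h : LagSol p lam M L F g s₀ w A) (t b : ℝ) :
    ∃ C : ℝ, ∀ x ∈ Icc (0:ℝ) b, ∀ y ∈ Icc (0:ℝ) b,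
      |eulU p lam F s₀ w A x t - eulU p lam F s₀ w A y t| ≤ C * |x - y| ^ (1 - lam) := by
  have hp := h.hp
  have hlam := h.hlam
  have hl := h.lam_mul
  have hm : Measurable fun x => eulSlope p lam F s₀ w A x t :=
    h.measurable_slope.comp (by fun_prop : Measurable fun x : ℝ => (x, t))
  have hlam' : lam = 1 / p := by field_simp; linarith
  have hlam1 : lam ≤ 1 / 2 := by
    rw [hlam']; exact one_div_le_one_div_of_le (by norm_num) hp
  set C := (∫ z in Ioc 0 b, |eulSlope p lam F s₀ w A z t| ^ p) ^ lam with hC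
  have key : ∀ x ∈ Icc (0:ℝ) b, ∀ y ∈ Icc (0:ℝ) b, x ≤ y →
      |eulU p lam F s₀ w A y t - eulU p lam F s₀ w A x t| ≤ C * |y - x| ^ (1 - lam) := by
    intro x hx y hy hxy
    rw [h.eulU_sub t hxy, intervalIntegral.integral_of_le hxy]
    have hq : p.HolderConjugate (1 / (1 - lam)) := by
      rw [Real.holderConjugate_iff]
      refine ⟨by linarith, ?_⟩
      rw [one_div, inv_inv, hlam']; ring
    have h1 := integral_mul_le_Lp_mul_Lq_of_nonneg (μ := volume.restrict (Ioc x y)) hq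
      (f := fun z => |eulSlope p lam F s₀ w A z t|) (g := fun _ => (1:ℝ))
      (ae_of_all _ fun z => abs_nonneg _) (ae_of_all _ fun z => zero_le_one) ?_ (memLp_const 1)
    · simp only [mul_one, Real.one_rpow, setIntegral_const, smul_eq_mul] at h1
      rw [measureReal_def, Real.volume_Ioc, ENNReal.toReal_ofReal (by linarith), one_div_one_div,
        ← hlam'] at h1
      rw [abs_of_nonneg (sub_nonneg.2 hxy)]
      have h0 : |∫ z in Ioc x y, eulSlope p lam F s₀ w A z t|
          ≤ ∫ z in Ioc x y, |eulSlope p lam F s₀ w A z t| := abs_integral_le_integral_abs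
      refine h0.trans (h1.trans ?_)
      refine mul_le_mul_of_nonneg_right ?_ (Real.rpow_nonneg (by linarith) _)
      refine Real.rpow_le_rpow (integral_nonneg fun z => by positivity) ?_ hlam.le
      exact setIntegral_mono_set (h.slopePow_int t 0 b) (ae_of_all _ fun z => by positivity)
        (Ioc_subset_Ioc hx.1 hy.2).eventuallyLE
    · have hp0 : ENNReal.ofReal p ≠ 0 := by simp; linarith
      rw [← integrable_norm_rpow_iff (by fun_prop) hp0 ENNReal.ofReal_ne_top,
        ENNReal.toReal_ofReal (by linarith)]
      have h5 : Integrable (fun z => |eulSlope p lam F s₀ w A z t| ^ p)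
        (volume.restrict (Ioc x y)) := h.slopePow_int t x y
      simpa using h5
  refine ⟨C, fun x hx y hy => ?_⟩
  rcases le_total x y with hxy | hxy
  · rw [abs_sub_comm, abs_sub_comm x]; exact key x hx y hy hxy
  · exact key y hy x hx hxy

end LagSol

/-! ### The weak formulation -/

namespace LagSol
variable {p lam M L : ℝ} {F g s₀ w : ℝ → ℝ} {A : ℝ → ℝ → ℝ}

lemma continuous_flow (h : LagSol p lam M L F g s₀ w A) :
    Continuous (fun q : ℝ × ℝ => (lagX p lam F s₀ w A q.1 q.2, q.2)) :=
  (h.X_cont.comp (by fun_prop : Continuous fun q : ℝ × ℝ => (q.1, q.2))).prodMk continuous_snd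

lemma measurable_density (h : LagSol p lam M L F g s₀ w A) :
    Measurable (fun q : ℝ × ℝ => ENNReal.ofReal (|strain lam s₀ w A q.1 q.2| ^ p)) :=
  ((continuous_absPow (by linarith [h.hp])).measurable.comp
    (h.strain_meas₂ h.adm)).ennreal_ofReal

/-- Change of variables `(ξ,t) ↦ (X(ξ,t),t)` in space-time. -/
lemma map_flow (h : LagSol p lam M L F g s₀ w A) :
    Measure.map (fun q : ℝ × ℝ => (lagX p lam F s₀ w A q.1 q.2, q.2))
      ((volume : Measure (ℝ × ℝ)).withDensity
        fun q => ENNReal.ofReal (|strain lam s₀ w A q.1 q.2| ^ p)) = volume := by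
  have hp := h.hp
  have hm := h.continuous_flow.measurable
  have hd := h.measurable_density
  symm
  rw [Measure.volume_eq_prod]
  refine Measure.prod_eq fun a b ha hb => ?_
  have hab : MeasurableSet ((fun q : ℝ × ℝ => (lagX p lam F s₀ w A q.1 q.2, q.2)) ⁻¹' (a ×ˢ b)) :=
    hm (ha.prod hb)
  rw [Measure.map_apply hm (ha.prod hb), withDensity_apply _ hab, ← lintegral_indicator hab,
    lintegral_prod_symm' _ (hd.indicator hab)]
  have key : ∀ t, ∫⁻ ξ, ((fun q : ℝ × ℝ => (lagX p lam F s₀ w A q.1 q.2, q.2)) ⁻¹' (a ×ˢ b)).indicator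
      (fun q : ℝ × ℝ => ENNReal.ofReal (|strain lam s₀ w A q.1 q.2| ^ p)) (ξ, t)
      = b.indicator (fun _ => volume a) t := by
    intro t
    have hmap := map_withDensity_primitive (X := fun ξ => lagX p lam F s₀ w A ξ t)
      (q := fun ξ => |strain lam s₀ w A ξ t| ^ p) (fun ξ => by positivity)
      (h.strainPow_int h.adm t) (fun a b => h.X_sub t a b) (h.X_cont_label t) (h.X_surj t)
    by_cases ht : t ∈ b
    · have ha' : MeasurableSet ((fun ξ => lagX p lam F s₀ w A ξ t) ⁻¹' a) :=
        (h.X_cont_label t).measurable ha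
      rw [indicator_of_mem ht]
      conv_rhs => rw [← hmap, Measure.map_apply (h.X_cont_label t).measurable ha,
        withDensity_apply _ ha', ← lintegral_indicator ha']
      refine lintegral_congr fun ξ => ?_
      by_cases hξ : lagX p lam F s₀ w A ξ t ∈ a
      · simp only [indicator, mem_preimage, mem_prod, hξ, ht, and_self, if_true]
      · simp only [indicator, mem_preimage, mem_prod, hξ, false_and, if_false]
    · rw [indicator_of_notMem ht]
      refine (lintegral_congr fun ξ => ?_).trans lintegral_zero
      exact indicator_of_notMem (fun hh => ht hh.2) _
  rw [lintegral_congr key, lintegral_indicator hb, setLIntegral_const]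

/-- For almost every label, at almost every time: either the strain is nonzero and the label is
the last one at its position, or the strain vanishes together with its time derivative. -/
lemma ae_regular (h : LagSol p lam M L F g s₀ w A) :
    ∀ᵐ ξ, ∀ᵐ t, (strain lam s₀ w A ξ t ≠ 0 ∧
        eulLabel p lam F s₀ w A (lagX p lam F s₀ w A ξ t) t = ξ) ∨
      (strain lam s₀ w A ξ t = 0 ∧ w ξ * g (lagU p lam s₀ w A ξ t) = 0) := by
  have hS := h.strain_meas₂ h.adm
  have h1 : ∀ᵐ ξ, ∀ᵐ t, strain lam s₀ w A ξ t ≠ 0 →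
      eulLabel p lam F s₀ w A (lagX p lam F s₀ w A ξ t) t = ξ := by
    refine (Measure.ae_ae_comm ?_).2 (ae_of_all _ h.ae_label_X)
    have h2 : Measurable fun q : ℝ × ℝ =>
        eulLabel p lam F s₀ w A (lagX p lam F s₀ w A q.1 q.2) q.2 :=
      h.measurable_label.comp h.continuous_flow.measurable
    have h3 : MeasurableSet {q : ℝ × ℝ | strain lam s₀ w A q.1 q.2 = 0} :=
      measurableSet_eq_fun hS measurable_const
    have h4 := measurableSet_eq_fun h2 measurable_fst
    exact h3.compl.imp h4
  filter_upwards [h1] with ξ hξ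
  filter_upwards [hξ, ae_deriv_eq_zero_of_eq_zero (h.hasDerivAt_strain ξ)] with t ht1 ht2
  by_cases h0 : strain lam s₀ w A ξ t = 0
  · refine Or.inr ⟨h0, ?_⟩
    have h3 := ht2 h0
    have h4 := h.hlam.ne'
    rw [mul_assoc] at h3
    exact (mul_eq_zero.1 h3).resolve_left h4
  · exact Or.inl ⟨h0, ht1 h0⟩

/-- The integrand of the weak formulation. -/
noncomputable def weakIntegrand (p lam : ℝ) (F g s₀ w : ℝ → ℝ) (A : ℝ → ℝ → ℝ)
    (φ : ℝ × ℝ → ℝ) (q : ℝ × ℝ) : ℝ :=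
  -(eulSlope p lam F s₀ w A q.1 q.2) * (pt φ q + F (eulU p lam F s₀ w A q.1 q.2) * px φ q)
    + (lam - 1) * g (eulU p lam F s₀ w A q.1 q.2) * (eulSlope p lam F s₀ w A q.1 q.2) ^ 2 * φ q

/-- The time derivative of `w |S|^(p-2) S φ(X,t)` along a characteristic. -/
noncomputable def fluxRate (p lam : ℝ) (F g s₀ w : ℝ → ℝ) (A : ℝ → ℝ → ℝ)
    (φ : ℝ × ℝ → ℝ) (ξ t : ℝ) : ℝ :=
  ((1 - lam) * g (lagU p lam s₀ w A ξ t) * (w ξ ^ 2 * |strain lam s₀ w A ξ t| ^ (p - 2)))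
      * φ (lagX p lam F s₀ w A ξ t, t)
    + w ξ * oddPow p (strain lam s₀ w A ξ t) *
      (pt φ (lagX p lam F s₀ w A ξ t, t)
        + F (lagU p lam s₀ w A ξ t) * px φ (lagX p lam F s₀ w A ξ t, t))

lemma hasDerivAt_flux_test (h : LagSol p lam M L F g s₀ w A) {φ : ℝ × ℝ → ℝ}
    (hφ : ContDiff ℝ 1 φ) (ξ t : ℝ) :
    HasDerivAt (fun t => w ξ * oddPow p (strain lam s₀ w A ξ t) * φ (lagX p lam F s₀ w A ξ t, t))
      (fluxRate p lam F g s₀ w A φ ξ t) t := by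
  have h1 : HasDerivAt (fun t => (lagX p lam F s₀ w A ξ t, t))
      (F (lagU p lam s₀ w A ξ t), (1:ℝ)) t := (h.hasDerivAt_X ξ t).prodMk (hasDerivAt_id t)
  have h2 : HasDerivAt (fun t => φ (lagX p lam F s₀ w A ξ t, t))
      (fderiv ℝ φ (lagX p lam F s₀ w A ξ t, t) (F (lagU p lam s₀ w A ξ t), (1:ℝ))) t :=
    HasFDerivAt.comp_hasDerivAt (f := fun t => (lagX p lam F s₀ w A ξ t, t)) t
      (hφ.differentiable one_ne_zero).differentiableAt.hasFDerivAt h1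
  refine ((h.hasDerivAt_flux ξ t).mul h2).congr_deriv ?_
  have h3 : ((F (lagU p lam s₀ w A ξ t), (1:ℝ)) : ℝ × ℝ)
      = F (lagU p lam s₀ w A ξ t) • ((1, 0) : ℝ × ℝ) + ((0, 1) : ℝ × ℝ) := by simp
  rw [h3, map_add, map_smul, smul_eq_mul, fluxRate, pt, px]
  ring

/-- Along almost every characteristic the transported weak integrand is an exact derivative. -/
lemma transported_eq (h : LagSol p lam M L F g s₀ w A) (φ : ℝ × ℝ → ℝ) :
    ∀ᵐ ξ, ∀ᵐ t, |strain lam s₀ w A ξ t| ^ p *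
        weakIntegrand p lam F g s₀ w A φ (lagX p lam F s₀ w A ξ t, t)
      = -fluxRate p lam F g s₀ w A φ ξ t := by
  have hp := h.hp
  filter_upwards [h.ae_regular] with ξ hξ
  filter_upwards [hξ] with t ht
  rcases ht with ⟨h0, hl⟩ | ⟨h0, hw⟩
  · rw [weakIntegrand, fluxRate]
    simp only [h.eulU_X]
    rw [eulSlope, hl]
    linear_combination
      (-(pt φ (lagX p lam F s₀ w A ξ t, t)
        + F (lagU p lam s₀ w A ξ t) * px φ (lagX p lam F s₀ w A ξ t, t))) *
        absPow_mul_div p (w ξ) (strain lam s₀ w A ξ t)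
      + ((lam - 1) * g (lagU p lam s₀ w A ξ t) * φ (lagX p lam F s₀ w A ξ t, t)) *
        absPow_mul_div_sq (p := p) (w := w ξ) h0
  · rw [fluxRate, h0]
    simp only [oddPow, abs_zero, Real.zero_rpow (show p ≠ 0 by linarith), zero_mul, mul_zero]
    linear_combination ((1 - lam) * w ξ * 0 ^ (p - 2) * φ (lagX p lam F s₀ w A ξ t, t)) * hw

lemma measurable_weakIntegrand (h : LagSol p lam M L F g s₀ w A) {φ : ℝ × ℝ → ℝ}
    (hφ : ContDiff ℝ 1 φ) : Measurable (weakIntegrand p lam F g s₀ w A φ) := by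
  have h1 := h.measurable_slope
  have h2 := h.eulU_cont
  have hF : Continuous F := continuous_iff_continuousAt.2 fun a => (h.F_deriv a).continuousAt
  have h3 : Measurable fun q : ℝ × ℝ => F (eulU p lam F s₀ w A q.1 q.2) :=
    (hF.comp h2).measurable
  have h4 : Measurable fun q : ℝ × ℝ => g (eulU p lam F s₀ w A q.1 q.2) :=
    (h.g_cont.comp h2).measurable
  have h5 : Measurable (pt φ) :=
    ((hφ.continuous_fderiv one_ne_zero).clm_apply continuous_const).measurable
  have h6 : Measurable (px φ) :=
    ((hφ.continuous_fderiv one_ne_zero).clm_apply continuous_const).measurable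
  have h7 := hφ.continuous.measurable
  exact ((h1.neg.mul (h5.add (h3.mul h6))).add
    (((h4.const_mul (lam - 1)).mul (h1.pow_const 2)).mul h7))

lemma integral_weakIntegrand (h : LagSol p lam M L F g s₀ w A) {φ : ℝ × ℝ → ℝ}
    (hφ : ContDiff ℝ 1 φ) (hc : HasCompactSupport φ) :
    ∫ q, weakIntegrand p lam F g s₀ w A φ q = 0 := by
  by_cases hi : Integrable (weakIntegrand p lam F g s₀ w A φ)
  swap
  · exact integral_undef hi
  have hp := h.hp
  have hm := h.measurable_weakIntegrand hφ
  have hd := h.measurable_density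
  have hΨ := h.continuous_flow.measurable
  have hi2 := hi
  rw [← h.map_flow, integrable_map_measure hm.aestronglyMeasurable hΨ.aemeasurable,
    integrable_withDensity_iff_integrable_smul' hd (ae_of_all _ fun _ => ENNReal.ofReal_lt_top)]
    at hi2
  rw [← h.map_flow, integral_map hΨ.aemeasurable hm.aestronglyMeasurable,
    integral_withDensity_eq_integral_toReal_smul₀ hd.aemeasurable
      (ae_of_all _ fun _ => ENNReal.ofReal_lt_top)]
  have hsimp : (fun q : ℝ × ℝ => (ENNReal.ofReal (|strain lam s₀ w A q.1 q.2| ^ p)).toReal •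
      weakIntegrand p lam F g s₀ w A φ (lagX p lam F s₀ w A q.1 q.2, q.2))
      = fun q : ℝ × ℝ => |strain lam s₀ w A q.1 q.2| ^ p *
      weakIntegrand p lam F g s₀ w A φ (lagX p lam F s₀ w A q.1 q.2, q.2) := by
    funext q
    rw [ENNReal.toReal_ofReal (by positivity), smul_eq_mul]
  simp only [Function.comp_def] at hi2
  rw [hsimp] at hi2 ⊢
  rw [Measure.volume_eq_prod] at hi2 ⊢
  rw [integral_prod _ hi2]
  refine integral_eq_zero_of_ae ?_
  filter_upwards [hi2.prod_right_ae, h.transported_eq φ] with ξ hξ1 hξ2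
  rw [integral_congr_ae hξ2, integral_neg]
  have h1 : Integrable (fun t => fluxRate p lam F g s₀ w A φ ξ t) := by
    simpa using (hξ1.congr hξ2).neg
  rw [integral_eq_zero_of_hasDerivAt_of_integrable (h.hasDerivAt_flux_test hφ ξ) h1]
  · simp
  · have hcont : Continuous (fun t => w ξ * oddPow p (strain lam s₀ w A ξ t) *
        φ (lagX p lam F s₀ w A ξ t, t)) :=
      continuous_iff_continuousAt.2 fun t => (h.hasDerivAt_flux_test hφ ξ t).continuousAt
    refine hcont.integrable_of_hasCompactSupport ?_
    refine HasCompactSupport.mul_left ?_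
    refine HasCompactSupport.of_support_subset_isCompact (hc.image continuous_snd) fun t ht => ?_
    exact ⟨_, subset_tsupport φ ht, rfl⟩

/-- The weak formulation. -/
lemma weak_form (h : LagSol p lam M L F g s₀ w A) {φ : ℝ × ℝ → ℝ}
    (hφ : ContDiff ℝ 1 φ) (hc : HasCompactSupport φ) {D : Set (ℝ × ℝ)} (hD : tsupport φ ⊆ D) :
    ∫ q in D, weakIntegrand p lam F g s₀ w A φ q = 0 := by
  rw [setIntegral_eq_integral_of_forall_compl_eq_zero, h.integral_weakIntegrand hφ hc]
  intro q hq
  have h1 : q ∉ tsupport φ := fun hh => hq (hD hh)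
  have h2 : φ q = 0 := image_eq_zero_of_notMem_tsupport h1
  have h3 : fderiv ℝ φ q = 0 :=
    image_eq_zero_of_notMem_tsupport fun hh => h1 (tsupport_fderiv_subset ℝ hh)
  simp [weakIntegrand, pt, px, h2, h3]

end LagSol

/-! ### Initial data and existence -/

/-- A Borel representative of the initial slope, extended by zero to `x ≤ 0`. -/
lemma exists_slope {p : ℝ} (hp : 2 ≤ p) {g₀ : ℝ → ℝ}
    (h_int : ∀ b : ℝ, 0 < b → IntervalIntegrable g₀ volume 0 b)
    (hW : ∀ b : ℝ, 0 < b → IntegrableOn (fun x => |g₀ x| ^ p) (Icc 0 b)) :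
    ∃ v : ℝ → ℝ, Measurable v ∧ (∀ x ≤ 0, v x = 0) ∧
      (∀ a b, IntervalIntegrable (fun x => (1 + |v x|) ^ p) volume a b) ∧
      ∀ x, 0 ≤ x → ∫ y in (0:ℝ)..x, v y = ∫ y in (0:ℝ)..x, g₀ y := by
  have hloc : ∀ n : ℕ, AEStronglyMeasurable g₀ (volume.restrict (Ioc (0:ℝ) (n + 1))) := fun n =>
    ((intervalIntegrable_iff_integrableOn_Ioc_of_le (by positivity)).1
      (h_int (n + 1) (by positivity))).aestronglyMeasurable
  have hU : (⋃ n : ℕ, Ioc (0:ℝ) (n + 1)) = Ioi 0 := by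
    ext x
    simp only [mem_iUnion, mem_Ioc, mem_Ioi]
    refine ⟨fun ⟨n, hn⟩ => hn.1, fun hx => ?_⟩
    obtain ⟨n, hn⟩ := exists_nat_ge x
    exact ⟨n, hx, by linarith⟩
  have hmeas : AEStronglyMeasurable g₀ (volume.restrict (Ioi (0:ℝ))) := by
    rw [← hU]; exact aestronglyMeasurable_iUnion_iff.2 hloc
  set v : ℝ → ℝ := (Ioi (0:ℝ)).indicator (hmeas.mk g₀) with hv
  have hvm : Measurable v := hmeas.stronglyMeasurable_mk.measurable.indicator measurableSet_Ioi
  have hv0 : ∀ x ≤ 0, v x = 0 := fun x hx => indicator_of_notMem (not_lt.2 hx) _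
  have hae : ∀ᵐ x, 0 < x → v x = g₀ x := by
    have h1 := (ae_restrict_iff' measurableSet_Ioi).1 hmeas.ae_eq_mk
    filter_upwards [h1] with x hx h0
    rw [hv, indicator_of_mem (mem_Ioi.2 h0), ← hx h0]
  refine ⟨v, hvm, hv0, ?_, fun x hx => ?_⟩
  · have hpow : ∀ b : ℝ, 0 < b → IntegrableOn (fun x => |v x| ^ p) (Ioc (-b) b) := by
      intro b hb
      have h1 : IntegrableOn (fun x => |v x| ^ p) (Ioc 0 b) := by
        refine ((hW b hb).mono_set Ioc_subset_Icc_self).congr_fun_ae ?_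
        filter_upwards [ae_restrict_of_ae hae, ae_restrict_mem measurableSet_Ioc] with x h2 h3
        rw [h2 h3.1]
      have h2 : IntegrableOn (fun x => |v x| ^ p) (Ioc (-b) 0) := by
        refine integrableOn_zero.congr_fun (fun x hx => ?_) measurableSet_Ioc
        rw [hv0 x hx.2, abs_zero, Real.zero_rpow (by linarith)]
      rw [← Ioc_union_Ioc_eq_Ioc (by linarith : -b ≤ 0) hb.le]
      exact h2.union h1
    have hbig : ∀ b : ℝ, 0 < b → IntegrableOn (fun x => (1 + |v x|) ^ p) (Ioc (-b) b) := by
      intro b hb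
      refine (((integrableOn_const (C := (1:ℝ)) (by simp) (by simp)).add (hpow b hb)).const_mul
        ((2:ℝ) ^ p)).mono' (by fun_prop : Measurable _).aestronglyMeasurable (ae_of_all _ fun x => ?_)
      show |(1 + |v x|) ^ p| ≤ 2 ^ p * (1 + |v x| ^ p)
      rw [abs_of_nonneg (by positivity)]
      rcases le_total |v x| 1 with h1 | h1
      · have h2 : (1 + |v x|) ^ p ≤ 2 ^ p := by gcongr; linarith
        have h3 : 0 ≤ (2:ℝ) ^ p * |v x| ^ p := by positivity
        linarith
      · have h2 : (1 + |v x|) ^ p ≤ (2 * |v x|) ^ p := by gcongr; linarith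
        rw [Real.mul_rpow (by norm_num) (abs_nonneg _)] at h2
        have h3 : 0 ≤ (2:ℝ) ^ p := by positivity
        linarith
    intro a b
    rw [intervalIntegrable_iff]
    refine (hbig (|a| + |b| + 1) (by positivity)).mono_set fun x hx => ?_
    rw [uIoc, mem_Ioc] at hx
    have ha := abs_le.1 (le_refl |a|)
    have hb := abs_le.1 (le_refl |b|)
    have ha' := abs_nonneg a
    have hb' := abs_nonneg b
    refine ⟨?_, ?_⟩
    · rcases inf_lt_iff.1 hx.1 with h | h <;> linarith
    · rcases le_sup_iff.1 hx.2 with h | h <;> linarith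
  · refine intervalIntegral.integral_congr_ae ?_
    filter_upwards [hae] with y hy h1
    rw [uIoc_of_le hx] at h1
    exact hy h1.1

/-- Existence of a Lagrangian solution issuing from a given initial slope. -/
lemma exists_lagSol {p lam M L : ℝ} {F g v : ℝ → ℝ} (hp : 2 ≤ p) (hlam : 0 < lam)
    (hl : lam * p = 1) (hlip : ∀ a b, |g a - g b| ≤ L * |a - b|) (hbd : ∀ a, |g a| ≤ M)
    (hF : ∀ a, HasDerivAt F (g a) a) (hv : Measurable v) (hv0 : ∀ x ≤ 0, v x = 0)
    (hvi : ∀ a b, IntervalIntegrable (fun x => (1 + |v x|) ^ p) volume a b) :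
    ∃ (n : ℕ → ℕ) (A : ℝ → ℝ → ℝ), (∀ k, 0 < n k) ∧
      LagSol p lam M L F g (matS n) (matW n v) A := by
  have hM : 0 ≤ M := (abs_nonneg _).trans (hbd 0)
  have hL : 0 ≤ L := by simpa using (abs_nonneg _).trans (hlip 1 0)
  obtain ⟨n, e, hn, he, hsmall⟩ := exists_cells (p := p) (v := v)
    (C := fun k : ℕ => L * (1 + lam * M * k) ^ (p - 1) * k) hlam.le
    (fun k => by positivity) hvi
  have hdata : LagData p lam M L g (matS n) (matW n v) :=
    { hp := hp, hlam := hlam, lam_mul := hl, g_lip := hlip, g_bd := hbd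
      s_meas := measurable_matS, w_meas := measurable_matW hv
      s_nonneg := matS_nonneg, s_le := matS_le, K_int := matW_int hn hv hv0 hvi }
  obtain ⟨A, hA, hfix, hmod⟩ := hdata.exists_fixedPoint
  refine ⟨n, A, hn, ⟨hdata, hA, hfix, hF, fun ξ => matS_neg, fun ξ => matW_neg hv0, fun t => ?_⟩⟩
  have hblock : ∀ k : ℕ, |t| ≤ k →
      (8:ℝ) ^ (-p) ≤ ∫ ξ in (k:ℝ)..(k + 1), |strain lam (matS n) (matW n v) A ξ t| ^ p := by
    intro k hk
    refine mat_coercive (by linarith) hn hv hv0 hvi hlam.le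
      (C := L * (1 + lam * M * k) ^ (p - 1) * k) (by positivity) (he k) (hsmall k)
      (A := fun ξ => A ξ t) (fun ξ η => (hmod ξ η t).trans ?_)
      (hA.1.comp (by fun_prop : Continuous fun ξ : ℝ => (ξ, t))).measurable
      (hdata.strainPow_int hA t k (k + 1))
    gcongr
    linarith
  set c := (8:ℝ) ^ (-p) with hc
  have hc0 : 0 < c := by positivity
  set X : ℝ → ℝ := fun ξ => lagX p lam F (matS n) (matW n v) A ξ t with hX
  have hsub : ∀ a b, X b - X a = ∫ ξ in a..b, |strain lam (matS n) (matW n v) A ξ t| ^ p := by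
    intro a b
    have := intervalIntegral.integral_interval_sub_left (hdata.strainPow_int hA t 0 b)
      (hdata.strainPow_int hA t 0 a)
    simp only [hX, lagX]
    linarith
  have hmono : Monotone X := fun a b hab => by
    have h1 : 0 ≤ X b - X a := by
      rw [hsub]
      exact intervalIntegral.integral_nonneg hab fun x _ => by positivity
    linarith
  set N := ⌈|t|⌉₊ with hN
  have hlow : ∀ j : ℕ, X N + j * c ≤ X ((N + j : ℕ) : ℝ) := by
    intro j
    induction j with
    | zero => simp
    | succ j ih =>
      have hj : (0:ℝ) ≤ j := Nat.cast_nonneg j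
      have h1 := hblock (N + j) ((Nat.le_ceil _).trans (by rw [← hN]; push_cast; linarith))
      rw [← hsub] at h1
      push_cast at h1 ih ⊢
      rw [← add_assoc]
      linarith
  refine tendsto_atTop_mono' atTop
    (f₁ := fun ξ : ℝ => X N + ((⌊ξ⌋₊ - N : ℕ) : ℝ) * c) ?_ ?_
  · filter_upwards [eventually_ge_atTop (N:ℝ)] with ξ hξ
    have hξ0 : 0 ≤ ξ := (Nat.cast_nonneg N).trans hξ
    have h2 : N ≤ ⌊ξ⌋₊ := Nat.le_floor hξ
    refine (hlow (⌊ξ⌋₊ - N)).trans (hmono ?_)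
    rw [Nat.add_sub_cancel' h2]
    exact Nat.floor_le hξ0
  · refine tendsto_atTop_add_const_left _ _ (Tendsto.atTop_mul_const hc0 ?_)
    exact tendsto_natCast_atTop_atTop.comp
      ((tendsto_sub_atTop_nat N).comp tendsto_nat_floor_atTop)

/-- The initial condition: at time `0` the labels sit at their initial positions. -/
lemma LagSol.eulU_initial {p lam M L : ℝ} {F g v : ℝ → ℝ} {n : ℕ → ℕ} {A : ℝ → ℝ → ℝ}
    (h : LagSol p lam M L F g (matS n) (matW n v) A) (hn : ∀ k, 0 < n k) (hv : Measurable v)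
    {x : ℝ} (hx : 0 ≤ x) :
    eulU p lam F (matS n) (matW n v) A x 0 = ∫ y in (0:ℝ)..x, v y := by
  have hp := h.hp
  have hS : ∀ ξ, strain lam (matS n) (matW n v) A ξ 0 = matS n ξ := fun ξ => by
    have : A ξ 0 = 0 := by rw [h.fix]; simp
    simp [strain, this]
  have hX : ∀ ξ, lagX p lam F (matS n) (matW n v) A ξ 0 = matX n ξ := fun ξ => by
    rw [lagX, matX, mul_zero, zero_add]
    congr 1
    funext η
    rw [hS]
    by_cases hη : η ∈ matSet n
    · simp [matS, hη]
    · simp [matS, hη, Real.zero_rpow (show p ≠ 0 by linarith)]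
  have h0 : 0 ≤ eulLabel p lam F (matS n) (matW n v) A x 0 :=
    h.le_label_iff.2 (by rw [hX, matX_zero]; exact hx)
  rw [eulU, lagU]
  simp only [hS]
  rw [integral_matW hn hv h0, ← hX, h.X_label]

end Lagrangian

/-- global existence of a weak solution of (E1)
`u_{tx} + f'(u) u_{xx} + λ f''(u) (u_x)² = 0` on `[0,∞) × [0,∞)` for
`λ ∈ (0,1/2]`, with boundary condition `u(0,t) = 0` and initial datum
`u₀ ∈ W^{1,1/λ}_loc` (represented by its locally integrable derivative `g₀`),
satisfying the compatibility condition `u₀(0) = 0`, `u₀'(0) = 0`.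
The solution `u` is continuous, takes the initial and boundary data pointwise,
is for each time locally absolutely continuous in `x` with derivative
`ux(·,t) ∈ L^{1/λ}_loc` (hence locally Hölder continuous with exponent `1−λ` in `x`),
and satisfies the weak formulation against all `C¹` test functions compactly
supported in `(0,∞) × (0,∞)`. -/
theorem stmt0 (lam : ℝ) (hlam : 0 < lam ∧ lam ≤ 1/2)
    (f : ℝ → ℝ) (hf : ContDiff ℝ 2 f) (hf0 : 0 ≤ deriv f 0)
    (hfLip : ∃ L : ℝ, ∀ a b : ℝ, |deriv (deriv f) a - deriv (deriv f) b| ≤ L * |a - b|)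
    (hfbd : ∃ M : ℝ, ∀ a : ℝ, |deriv (deriv f) a| ≤ M)
    (u₀ g₀ : ℝ → ℝ)
    (hu₀0 : u₀ 0 = 0)
    (hu₀'0 : HasDerivWithinAt u₀ 0 (Ici 0) 0)
    (hg₀int : ∀ b : ℝ, 0 < b → IntervalIntegrable g₀ volume 0 b)
    (hu₀AC : ∀ x : ℝ, 0 ≤ x → u₀ x = ∫ y in (0:ℝ)..x, g₀ y)
    (hu₀W : ∀ b : ℝ, 0 < b → IntegrableOn (fun x => |g₀ x| ^ (1/lam)) (Icc 0 b)) :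
    ∃ u ux : ℝ → ℝ → ℝ,
      -- continuity of the solution
      ContinuousOn (fun p : ℝ × ℝ => u p.1 p.2) (Ici 0 ×ˢ Ici 0) ∧
      -- boundary condition
      (∀ t : ℝ, 0 ≤ t → u 0 t = 0) ∧
      -- initial condition
      (∀ x : ℝ, 0 ≤ x → u x 0 = u₀ x) ∧
      -- for each time, u(·,t) is locally absolutely continuous with derivative
      -- ux(·,t), and lies in W^{1,1/λ}_loc; hence it is locally Hölder
      -- continuous with exponent 1−λ
      (∀ t : ℝ, 0 ≤ t →
        (∀ b : ℝ, 0 < b → IntervalIntegrable (fun y => ux y t) volume 0 b) ∧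
        (∀ x : ℝ, 0 ≤ x → u x t = ∫ y in (0:ℝ)..x, ux y t) ∧
        (∀ b : ℝ, 0 < b → IntegrableOn (fun x => |ux x t| ^ (1/lam)) (Icc 0 b)) ∧
        (∀ b : ℝ, 0 < b → ∃ C : ℝ, ∀ x₁ ∈ Icc (0:ℝ) b, ∀ x₂ ∈ Icc (0:ℝ) b,
          |u x₁ t - u x₂ t| ≤ C * |x₁ - x₂| ^ (1 - lam))) ∧
      -- the weak formulation of (E1)
      (∀ φ : ℝ × ℝ → ℝ, ContDiff ℝ 1 φ → HasCompactSupport φ →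
        tsupport φ ⊆ Ioi 0 ×ˢ Ioi 0 →
        ∫ p in (Ioi (0:ℝ) ×ˢ Ioi (0:ℝ)),
          (-(ux p.1 p.2) * (pt φ p + deriv f (u p.1 p.2) * px φ p)
            + (lam - 1) * deriv (deriv f) (u p.1 p.2) * (ux p.1 p.2) ^ 2 * φ p) = 0) := by
  obtain ⟨hlam0, hlam2⟩ := hlam
  obtain ⟨L, hL⟩ := hfLip
  obtain ⟨M, hM⟩ := hfbd
  have hp : 2 ≤ 1 / lam := by rw [le_div_iff₀ hlam0]; linarith
  have hF : ∀ a, HasDerivAt (deriv f) (deriv (deriv f) a) a := fun a =>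
    (((contDiff_succ_iff_deriv (n := 1)).1 hf).2.2.differentiable one_ne_zero a).hasDerivAt
  obtain ⟨v, hv, hv0, hvi, hvg⟩ := exists_slope hp hg₀int hu₀W
  obtain ⟨n, A, hn, h⟩ := exists_lagSol hp hlam0 (mul_one_div_cancel hlam0.ne') hL hM hF hv hv0 hvi
  refine ⟨eulU (1 / lam) lam (deriv f) (matS n) (matW n v) A,
    eulSlope (1 / lam) lam (deriv f) (matS n) (matW n v) A, h.eulU_cont.continuousOn,
    fun t ht => h.eulU_zero hf0 ht, fun x hx => ?_, fun t ht => ⟨fun b hb => ?_, fun x hx => ?_,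
    fun b hb => ?_, fun b _ => h.eulU_holder t b⟩, fun φ hφ hc hs => h.weak_form hφ hc hs⟩
  · rw [h.eulU_initial hn hv hx, hvg x hx, hu₀AC x hx]
  · exact (intervalIntegrable_iff_integrableOn_Ioc_of_le hb.le).2 (h.slope_int t 0 b)
  · rw [← h.eulU_sub t hx, h.eulU_zero hf0 ht, sub_zero]
  · exact (integrableOn_Icc_iff_integrableOn_Ioc (by simp)).2 (h.slopePow_int t 0 b)
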